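/- Let x be a vertex of degree 3 in a nonplanar graph G. Suppose G has no k-separation {G1, G2} with k ≤ 2 such that some Gi contains x together with all three of its neighbors. Then G has a subgraph G' that is a subdivision of K_{3,3} in which x has degree 3 (i.e., x is a branch vertex of the subdivision). -/

import Mathlib

open SimpleGraph

/-- `H` is a minor of `G` (branch-set / model definition). -/
def IsMinor {W V : Type*} (H : SimpleGraph W) (G : SimpleGraph V) : Prop :=
  ∃ B : W → Set V,
    (∀ w, (B w).Nonempty) ∧
    (∀ w, (G.induce (B w)).Connected) ∧
    (Pairwise fun w₁ w₂ => Disjoint (B w₁) (B w₂)) ∧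
    (∀ ⦃w₁ w₂ : W⦄, H.Adj w₁ w₂ → ∃ v₁ ∈ B w₁, ∃ v₂ ∈ B w₂, G.Adj v₁ v₂)

def K5 : SimpleGraph (Fin 5) := ⊤

def K33 : SimpleGraph (Fin 3 ⊕ Fin 3) := completeBipartiteGraph (Fin 3) (Fin 3)

/-- A graph is planar iff it has neither a `K₅` nor a `K₃,₃` minor (Wagner's theorem). -/
def Planar {V : Type*} (G : SimpleGraph V) : Prop := ¬ IsMinor K5 G ∧ ¬ IsMinor K33 G

/-- `G / uw`: contract the edge `uw`, merging `w` into `u` (the vertex `w` becomes isolated). -/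
def contractEdge {V : Type*} (G : SimpleGraph V) (u w : V) : SimpleGraph V :=
  SimpleGraph.fromRel fun a b =>
    a ≠ w ∧ b ≠ w ∧ (G.Adj a b ∨ (a = u ∧ G.Adj w b) ∨ (b = u ∧ G.Adj a w))

/-- A nonplanar graph is almost-planar if for every edge, deletion or contraction is planar. -/
def AlmostPlanar {V : Type*} (G : SimpleGraph V) : Prop :=
  ¬ Planar G ∧ ∀ ⦃u v : V⦄, G.Adj u v →
    (Planar (G.deleteEdges {s(u, v)}) ∨ Planar (contractEdge G u v))

/-- `G` is `k`-connected: more than `k` vertices and deleting fewer than `k` vertices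
leaves a connected graph. -/
def KConnected {V : Type*} (G : SimpleGraph V) (k : ℕ) : Prop :=
  k < Nat.card V ∧ ∀ s : Set V, s.ncard < k → (G.induce (sᶜ)).Connected

/-- `{G[A], G[B]}` is a `k`-separation of `G`. -/
def IsSep {V : Type*} (G : SimpleGraph V) (k : ℕ) (A B : Set V) : Prop :=
  A ∪ B = Set.univ ∧ A ≠ Set.univ ∧ B ≠ Set.univ ∧ (A ∩ B).ncard = k ∧
  ∀ ⦃x y : V⦄, G.Adj x y → (x ∈ A ∧ y ∈ A) ∨ (x ∈ B ∧ y ∈ B)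

/-- The star `K_{1,3}`, with centre `0`. -/
def K13 : SimpleGraph (Fin 4) := SimpleGraph.fromRel fun a _ => a = 0

def InternallyFourConnected {V : Type*} (G : SimpleGraph V) : Prop :=
  KConnected G 3 ∧ 5 ≤ Nat.card V ∧
  ∀ A B : Set V, IsSep G 3 A B →
    Xor' (Nonempty (G.induce A ≃g K13)) (Nonempty (G.induce B ≃g K13))

/-- The wheel `W_n`: a cycle of length `n` plus a hub (`none`) joined to all of it. -/
def wheelGraph (n : ℕ) : SimpleGraph (Option (Fin n)) :=
  SimpleGraph.fromRel fun a b =>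
    match a, b with
    | some i, some j => j.val = (i.val + 1) % n
    | none, some _ => True
    | _, _ => False

def IsWheel {V : Type*} (G : SimpleGraph V) : Prop :=
  ∃ n, 3 ≤ n ∧ Nonempty (G ≃g wheelGraph n)

/-- The double wheel `DW_n`: a cycle of length `n` plus two adjacent hubs joined to all of it. -/
def doubleWheel (n : ℕ) : SimpleGraph (Fin n ⊕ Fin 2) :=
  SimpleGraph.fromRel fun a b =>
    match a, b with
    | .inl i, .inl j => j.val = (i.val + 1) % n
    | .inl _, .inr _ => True
    | .inr _, .inr _ => True
    | _, _ => False

/-- The Möbius ladder `M_n`: a cycle of length `2n` plus all "opposite" chords. -/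
def mobiusLadder (n : ℕ) : SimpleGraph (Fin (2 * n)) :=
  SimpleGraph.fromRel fun i j =>
    j.val = (i.val + 1) % (2 * n) ∨ j.val = (i.val + n) % (2 * n)

/-- `C²_m`: a cycle of length `m` plus all chords between vertices at distance two. -/
def squareCycle (m : ℕ) : SimpleGraph (Fin m) :=
  SimpleGraph.fromRel fun i j =>
    j.val = (i.val + 1) % m ∨ j.val = (i.val + 2) % m

/-- The alternating double wheel `AW_{2n}`: a cycle of length `2n` plus two adjacent hubs,
each joined to alternating cycle vertices. -/
def altDoubleWheel (n : ℕ) : SimpleGraph (Fin (2 * n) ⊕ Fin 2) :=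
  SimpleGraph.fromRel fun a b =>
    match a, b with
    | .inl i, .inl j => j.val = (i.val + 1) % (2 * n)
    | .inl i, .inr k => i.val % 2 = k.val
    | .inr _, .inr _ => True
    | _, _ => False

/-- The class `𝒲`: three wheels glued along a common triangle `V₀`, with no other edges. -/
def InClassW {V : Type*} (G : SimpleGraph V) : Prop :=
  ∃ P : V → Fin 4,
    (P ⁻¹' {0}).ncard = 3 ∧
    (∀ x y : V, P x = 0 → P y = 0 → x ≠ y → G.Adj x y) ∧
    (∀ i : Fin 4, i ≠ 0 → IsWheel (G.induce {v | P v = 0 ∨ P v = i})) ∧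
    (∀ ⦃x y : V⦄, G.Adj x y → ∃ i : Fin 4, i ≠ 0 ∧ (P x = 0 ∨ P x = i) ∧ (P y = 0 ∨ P y = i))

/-- `EX₁`: `K₃,₃` plus a vertex joined to all of one colour class. -/
def EX1 : SimpleGraph (Option (Fin 3 ⊕ Fin 3)) :=
  SimpleGraph.fromRel fun a b =>
    match a, b with
    | some (.inl _), some (.inr _) => True
    | none, some (.inl _) => True
    | _, _ => False

/-- `EX₂`: `K₅` plus a vertex joined to three of its vertices. -/
def EX2 : SimpleGraph (Option (Fin 5)) :=
  SimpleGraph.fromRel fun a b =>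
    match a, b with
    | some i, some j => i ≠ j
    | none, some j => j.val < 3
    | _, _ => False

/-- `EX₈`: `K₃,₃` plus a vertex joined to two vertices of one class and one of the other. -/
def EX8 : SimpleGraph (Option (Fin 3 ⊕ Fin 3)) :=
  SimpleGraph.fromRel fun a b =>
    match a, b with
    | some (.inl _), some (.inr _) => True
    | none, some x => x = Sum.inl 0 ∨ x = Sum.inl 1 ∨ x = Sum.inr 0
    | _, _ => False

/-- `K₅ʰ`: subdivide the edges `01` and `02` of `K₅` and join the two subdivision vertices. -/
def K5h : SimpleGraph (Fin 5 ⊕ Fin 2) :=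
  SimpleGraph.fromRel fun a b =>
    match a, b with
    | .inl i, .inl j =>
        i ≠ j ∧ ¬(i = 0 ∧ j = 1) ∧ ¬(i = 1 ∧ j = 0) ∧ ¬(i = 0 ∧ j = 2) ∧ ¬(i = 2 ∧ j = 0)
    | .inl i, .inr k => (k = 0 ∧ (i = 0 ∨ i = 1)) ∨ (k = 1 ∧ (i = 0 ∨ i = 2))
    | .inr _, .inr _ => True
    | _, _ => False

/-- `K₃,₃ʰ`: subdivide two edges of `K₃,₃` at a common endpoint and join
the two subdivision vertices. -/
def K33h : SimpleGraph ((Fin 3 ⊕ Fin 3) ⊕ Fin 2) :=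
  SimpleGraph.fromRel fun a b =>
    match a, b with
    | .inl (.inl i), .inl (.inr j) => ¬(i = 0 ∧ (j = 0 ∨ j = 1))
    | .inl (.inr j), .inl (.inl i) => ¬(i = 0 ∧ (j = 0 ∨ j = 1))
    | .inl x, .inr k =>
        (k = 0 ∧ (x = Sum.inl 0 ∨ x = Sum.inr 0)) ∨ (k = 1 ∧ (x = Sum.inl 0 ∨ x = Sum.inr 1))
    | .inr _, .inr _ => True
    | _, _ => False

/-- `K₅⁺`: `K₅` plus a pendant vertex. -/
def K5plus : SimpleGraph (Option (Fin 5)) :=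
  SimpleGraph.fromRel fun a b =>
    match a, b with
    | some i, some j => i ≠ j
    | none, some j => j = 0
    | _, _ => False

/-- `K₃,₃⁺`: `K₃,₃` plus a pendant vertex. -/
def K33plus : SimpleGraph (Option (Fin 3 ⊕ Fin 3)) :=
  SimpleGraph.fromRel fun a b =>
    match a, b with
    | some (.inl _), some (.inr _) => True
    | none, some x => x = Sum.inl 0
    | _, _ => False

/-- `K₅ ⊕ e`: disjoint union of `K₅` and one edge. -/
def K5oplus : SimpleGraph (Fin 5 ⊕ Fin 2) :=
  SimpleGraph.fromRel fun a b =>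
    match a, b with
    | .inl i, .inl j => i ≠ j
    | .inr _, .inr _ => True
    | _, _ => False

/-- `K₃,₃ ⊕ e`: disjoint union of `K₃,₃` and one edge. -/
def K33oplus : SimpleGraph ((Fin 3 ⊕ Fin 3) ⊕ Fin 2) :=
  SimpleGraph.fromRel fun a b =>
    match a, b with
    | .inl (.inl _), .inl (.inr _) => True
    | .inr _, .inr _ => True
    | _, _ => False

/-- The triad addition of `H` at `x y z`: add a new vertex joined to `x`, `y`, `z`. -/
def triadAddition {U : Type*} (H : SimpleGraph U) (x y z : U) : SimpleGraph (Option U) :=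
  SimpleGraph.fromRel fun a b =>
    match a, b with
    | some u, some v => H.Adj u v
    | none, some u => u = x ∨ u = y ∨ u = z
    | _, _ => False

def IsTriadAdditionOf {V U : Type*} (G : SimpleGraph V) (H : SimpleGraph U) : Prop :=
  ∃ x y z : U, x ≠ y ∧ y ≠ z ∧ x ≠ z ∧ Nonempty (G ≃g triadAddition H x y z)

/-- `G` is obtained from `H` by subdividing (possibly repeatedly) edges of `H`,
all of which lie in `S`. -/
def IsSubdivisionWithin {V W : Type*} (G : SimpleGraph V) (H : SimpleGraph W)
    (S : Set (Sym2 W)) : Prop :=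
  ∃ (f : W ↪ V) (p : ∀ ⦃u v : W⦄, H.Adj u v → G.Walk (f u) (f v)),
    (∀ ⦃u v : W⦄ (h : H.Adj u v), (p h).IsPath) ∧
    (∀ ⦃u v : W⦄ (h : H.Adj u v), p h.symm = (p h).reverse) ∧
    (∀ ⦃u v : W⦄ (h : H.Adj u v), s(u, v) ∉ S → (p h).length = 1) ∧
    (∀ ⦃u v : W⦄ (h : H.Adj u v) (w : W), f w ∈ (p h).support → w = u ∨ w = v) ∧
    (∀ ⦃u v u' v' : W⦄ (h : H.Adj u v) (h' : H.Adj u' v'), s(u, v) ≠ s(u', v') →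
      ∀ x : V, x ∈ (p h).support → x ∈ (p h').support → x ∈ Set.range f) ∧
    (∀ x : V, x ∈ Set.range f ∨ ∃ (u v : W) (h : H.Adj u v), x ∈ (p h).support) ∧
    (∀ e ∈ G.edgeSet, ∃ (u v : W) (h : H.Adj u v), e ∈ (p h).edges)

/-- `G` is a subdivision of `H`. -/
def IsSubdivision {V W : Type*} (G : SimpleGraph V) (H : SimpleGraph W) : Prop :=
  IsSubdivisionWithin G H Set.univ

/-- `D(H)`: the set of edges of `H` whose deletion leaves a planar graph. -/
def Dset {U : Type*} (H : SimpleGraph U) : Set (Sym2 U) :=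
  {e | e ∈ H.edgeSet ∧ Planar (H.deleteEdges {e})}

/-- `G[A]` together with all edges between vertices of `T` (`T ⊆ A` intended). -/
def deltaGraph {V : Type*} (G : SimpleGraph V) (A T : Set V) : SimpleGraph A :=
  SimpleGraph.fromRel fun a b => G.Adj a.1 b.1 ∨ (a.1 ∈ T ∧ b.1 ∈ T)

/-- `G[A]^Y` for the separation `{G[A], G[B]}`: add a new vertex joined to `A ∩ B`. -/
def sepY {V : Type*} (G : SimpleGraph V) (A B : Set V) : SimpleGraph (Option A) :=
  SimpleGraph.fromRel fun x y =>
    match x, y with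
    | some a, some b => G.Adj a.1 b.1
    | none, some a => a.1 ∈ A ∩ B
    | _, _ => False

/-- `G₂` is obtained from `G` by adding isolated vertices. -/
def AddIsolated {V₂ V : Type*} (G₂ : SimpleGraph V₂) (G : SimpleGraph V) : Prop :=
  ∃ f : V ↪ V₂, (∀ a b : V, G₂.Adj (f a) (f b) ↔ G.Adj a b) ∧
    ∀ x : V₂, x ∉ Set.range f → ∀ y : V₂, ¬ G₂.Adj x y

/-- The set of non-isolated vertices of `G` (so `G* = G.induce (core G)`). -/
def core {V : Type*} (G : SimpleGraph V) : Set V := {v | ∃ w, G.Adj v w}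

/-- `G` is obtained from `G'` by 3-summing wheels onto distinct triangles of `G'`. -/
def SumWheelsOnto {V U : Type*} (G : SimpleGraph V) (G' : SimpleGraph U) : Prop :=
  ∃ (g : U ↪ V) (k : ℕ) (Wp : Fin k → Set V) (T : Fin k → Set U),
    (∀ i, (T i).ncard = 3) ∧
    (∀ i, ∀ x ∈ T i, ∀ y ∈ T i, x ≠ y → G'.Adj x y) ∧
    Function.Injective T ∧
    (∀ i, Disjoint (Wp i) (Set.range ⇑g)) ∧
    (Pairwise fun i j => Disjoint (Wp i) (Wp j)) ∧
    (Set.range ⇑g ∪ ⋃ i, Wp i) = Set.univ ∧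
    (∀ i, IsWheel (deltaGraph G (Wp i ∪ ⇑g '' T i) (⇑g '' T i))) ∧
    (∀ a b : U, G.Adj (g a) (g b) → G'.Adj a b) ∧
    (∀ a b : U, G'.Adj a b → (G.Adj (g a) (g b) ∨ ∃ i, a ∈ T i ∧ b ∈ T i)) ∧
    (∀ ⦃x y : V⦄, G.Adj x y → (x ∈ Set.range ⇑g ∧ y ∈ Set.range ⇑g) ∨
      ∃ i, x ∈ Wp i ∪ ⇑g '' T i ∧ y ∈ Wp i ∪ ⇑g '' T i) ∧
    (∀ i, ∀ x ∈ Wp i, ∀ ⦃y : V⦄, G.Adj x y → y ∈ Wp i ∪ ⇑g '' T i)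

/-- `H` has an edge whose deletion and contraction are both nonplanar. -/
def HasBadEdge {V : Type*} (H : SimpleGraph V) : Prop :=
  ∃ u v : V, H.Adj u v ∧ ¬ Planar (H.deleteEdges {s(u, v)}) ∧ ¬ Planar (contractEdge H u v)


namespace R5
open SimpleGraph

/-- `S` is connected in `G`, phrased through closed subsets. -/
def Cn {V : Type*} (G : SimpleGraph V) (S : Set V) : Prop :=
  ∀ T : Set V, (∃ t ∈ S, t ∈ T) → (∀ a ∈ S, a ∈ T → ∀ b ∈ S, G.Adj a b → b ∈ T) → S ⊆ T

/-- No edge of `G` joins `A \ B` to `B \ A`. -/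
def NoCross {V : Type*} (G : SimpleGraph V) (A B : Set V) : Prop :=
  ∀ a b, G.Adj a b → (a ∈ A ∧ b ∈ A) ∨ (a ∈ B ∧ b ∈ B)

lemma Cn.union {V : Type*} {G : SimpleGraph V} {S T : Set V} (hS : Cn G S) (hT : Cn G T)
    {p : V} (hp : p ∈ S) (hp' : p ∈ T) : Cn G (S ∪ T) := by
  intro U hU hcl
  have hclS : ∀ a ∈ S, a ∈ U → ∀ b ∈ S, G.Adj a b → b ∈ U :=
    fun a ha hu b hb h => hcl a (Or.inl ha) hu b (Or.inl hb) h
  have hclT : ∀ a ∈ T, a ∈ U → ∀ b ∈ T, G.Adj a b → b ∈ U :=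
    fun a ha hu b hb h => hcl a (Or.inr ha) hu b (Or.inr hb) h
  have hpU : p ∈ U := by
    obtain ⟨t, ht | ht, htU⟩ := hU
    · exact hS U ⟨t, ht, htU⟩ hclS hp
    · exact hT U ⟨t, ht, htU⟩ hclT hp'
  exact Set.union_subset (hS U ⟨p, hp, hpU⟩ hclS) (hT U ⟨p, hp', hpU⟩ hclT)

lemma Cn.union_adj {V : Type*} {G : SimpleGraph V} {S T : Set V} (hS : Cn G S) (hT : Cn G T)
    {p q : V} (hp : p ∈ S) (hq : q ∈ T) (h : G.Adj p q) : Cn G (S ∪ T) := by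
  intro U hU hcl
  have hclS : ∀ a ∈ S, a ∈ U → ∀ b ∈ S, G.Adj a b → b ∈ U :=
    fun a ha hu b hb h => hcl a (Or.inl ha) hu b (Or.inl hb) h
  have hclT : ∀ a ∈ T, a ∈ U → ∀ b ∈ T, G.Adj a b → b ∈ U :=
    fun a ha hu b hb h => hcl a (Or.inr ha) hu b (Or.inr hb) h
  have hpU : p ∈ U := by
    obtain ⟨t, ht | ht, htU⟩ := hU
    · exact hS U ⟨t, ht, htU⟩ hclS hp
    · exact hcl q (Or.inr hq) (hT U ⟨t, ht, htU⟩ hclT hq) p (Or.inl hp) h.symm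
  have hqU : q ∈ U := hcl p (Or.inl hp) hpU q (Or.inr hq) h
  exact Set.union_subset (hS U ⟨p, hp, hpU⟩ hclS) (hT U ⟨q, hq, hqU⟩ hclT)

lemma Cn.singleton {V : Type*} (G : SimpleGraph V) (a : V) : Cn G {a} := by
  rintro T ⟨t, rfl, ht⟩ _ b rfl
  exact ht

lemma Cn.mono {V : Type*} {G H : SimpleGraph V} {S : Set V} (hS : Cn G S)
    (h : ∀ a ∈ S, ∀ b ∈ S, G.Adj a b → H.Adj a b) : Cn H S :=
  fun T hT hcl => hS T hT fun a ha hu b hb hab => hcl a ha hu b hb (h a ha b hb hab)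

/-- A connected set meeting both sides of a separation meets the separator. -/
lemma Cn.meets {V : Type*} {G : SimpleGraph V} {S A B : Set V} (hS : Cn G S)
    (hx : NoCross G A B) {a b : V} (ha : a ∈ S) (haA : a ∈ A) (hb : b ∈ S)
    (hbB : b ∈ B) : ∃ s ∈ S, s ∈ A ∧ s ∈ B := by
  by_contra hno
  push Not at hno
  have := hS A ⟨a, ha, haA⟩ (by
    intro p hp hpA q hq hpq
    rcases hx p q hpq with h | h
    · exact h.2
    · exact absurd h.1 (hno p hp hpA)) hb
  exact hno b hb this hbB

/-- A connected set with an element in a set closed under adjacency is contained in it. -/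
lemma Cn.sub {V : Type*} {G : SimpleGraph V} {S T : Set V} (hS : Cn G S)
    {a : V} (ha : a ∈ S) (haT : a ∈ T) (h : ∀ p q, G.Adj p q → p ∈ T → q ∈ T) : S ⊆ T :=
  hS T ⟨a, ha, haT⟩ fun p _ hp q _ hpq => h p q hpq hp

/-- Restriction of `G` to edges within `A`. -/
def within {V : Type*} (G : SimpleGraph V) (A : Set V) : SimpleGraph V where
  Adj a b := G.Adj a b ∧ a ∈ A ∧ b ∈ A
  symm := ⟨fun _ _ h => ⟨h.1.symm, h.2.2, h.2.1⟩⟩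
  loopless := ⟨fun _ h => G.loopless.irrefl _ h.1⟩

lemma within_le {V : Type*} (G : SimpleGraph V) (A : Set V) : within G A ≤ G :=
  fun _ _ h => h.1

lemma within_sub {V : Type*} {G : SimpleGraph V} {A S : Set V} (hS : Cn (within G A) S)
    {a : V} (ha : a ∈ S) (haT : a ∈ A) : S ⊆ A :=
  hS.sub ha haT fun _ _ h _ => h.2.2

/-- Menger's theorem (set version, with connected sets instead of paths). -/
theorem menger {V : Type*} [Finite V] (k : ℕ) : ∀ (n : ℕ) (G : SimpleGraph V),
    G.edgeSet.ncard = n → ∀ (Y Z : Set V),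
    (∀ A B : Set V, (∀ v, v ∈ A ∨ v ∈ B) → NoCross G A B → Y ⊆ A → Z ⊆ B →
      k ≤ (A ∩ B).ncard) →
    ∃ P : Fin k → Set V, (∀ i, Cn G (P i)) ∧ (∀ i j v, v ∈ P i → v ∈ P j → i = j) ∧
      (∀ i, ∃ v ∈ P i, v ∈ Y) ∧ (∀ i, ∃ v ∈ P i, v ∈ Z) := by
  intro n
  induction n using Nat.strong_induction_on with
  | _ n ih =>
  intro G hG Y Z hsep
  by_cases hE : ∃ u v, G.Adj u v
  swap
  · push Not at hE
    have h1 := hsep Y (Yᶜ ∪ Z) (fun v => by by_cases h : v ∈ Y <;> simp [h])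
      (fun a b h => absurd h (hE a b)) le_rfl Set.subset_union_right
    have h2 : Y ∩ (Yᶜ ∪ Z) = Y ∩ Z := by ext; simp; tauto
    rw [h2, Set.ncard_eq_toFinset_card _ (Set.toFinite _)] at h1
    obtain ⟨t, ht, htc⟩ := Finset.exists_subset_card_eq h1
    let e := t.equivFinOfCardEq htc
    have hmem : ∀ i, ((e.symm i : t) : V) ∈ Y ∩ Z := fun i => by
      have := ht (e.symm i).2
      simpa using this
    refine ⟨fun i => {((e.symm i : t) : V)}, fun i => Cn.singleton _ _, ?_,
      fun i => ⟨_, rfl, (hmem i).1⟩, fun i => ⟨_, rfl, (hmem i).2⟩⟩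
    intro i j v hi hj
    have : ((e.symm i : t) : V) = (e.symm j : t) := by
      rw [← Set.mem_singleton_iff.1 hi, ← Set.mem_singleton_iff.1 hj]
    exact e.symm.injective (Subtype.ext this)
  · obtain ⟨u0, v0, huv0⟩ := hE
    have hlt : ∀ {G' : SimpleGraph V} {u v : V}, G.Adj u v → G' ≤ G → ¬ G'.Adj u v →
        G'.edgeSet.ncard < n := by
      intro G' u v huv hle hn
      rw [← hG]
      apply Set.ncard_lt_ncard _ (Set.toFinite _)
      refine ⟨edgeSet_mono hle, fun h => hn ?_⟩
      exact h (show s(u, v) ∈ G.edgeSet from huv)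
    by_cases hdel : ∀ A B : Set V, (∀ v, v ∈ A ∨ v ∈ B) →
        NoCross (G.deleteEdges {s(u0, v0)}) A B → Y ⊆ A → Z ⊆ B → k ≤ (A ∩ B).ncard
    · obtain ⟨P, h1, h2⟩ := ih _ (hlt huv0 (deleteEdges_le _) (by simp)) _ rfl Y Z hdel
      exact ⟨P, fun i => (h1 i).mono fun a _ b _ h => deleteEdges_le _ h, h2⟩
    · push Not at hdel
      obtain ⟨A, B, hcov, hx, hYA, hZB, hlt'⟩ := hdel
      obtain ⟨u, v, huv, huA, hvB, huB, hvA, hx'⟩ : ∃ u v, G.Adj u v ∧ u ∈ A ∧ v ∈ B ∧ u ∉ B ∧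
          v ∉ A ∧ ∀ a b, G.Adj a b → ((a ∈ A ∧ b ∈ A) ∨ (a ∈ B ∧ b ∈ B)) ∨
            (a = u ∧ b = v) ∨ (a = v ∧ b = u) := by
        have key : ∀ a b, G.Adj a b → ((a ∈ A ∧ b ∈ A) ∨ (a ∈ B ∧ b ∈ B)) ∨
            (a = u0 ∧ b = v0) ∨ (a = v0 ∧ b = u0) := by
          intro a b hab
          by_cases he : s(a, b) = s(u0, v0)
          · right; simpa using he
          · left; exact hx a b (by simp [hab, he])
        by_cases hc : (u0 ∈ A ∧ v0 ∈ A) ∨ (u0 ∈ B ∧ v0 ∈ B)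
        · exfalso
          have := hsep A B hcov (by
            intro a b hab
            rcases key a b hab with h | ⟨rfl, rfl⟩ | ⟨rfl, rfl⟩
            · exact h
            · exact hc
            · tauto) hYA hZB
          omega
        · have h1 := hcov u0
          have h2 := hcov v0
          by_cases h3 : u0 ∈ A
          · exact ⟨u0, v0, huv0, h3, by tauto, by tauto, by tauto, key⟩
          · refine ⟨v0, u0, huv0.symm, by tauto, by tauto, by tauto, by tauto, ?_⟩
            intro a b hab
            have := key a b hab
            tauto
      have hu_card : (insert u (A ∩ B)).ncard ≤ k := by
        have := Set.ncard_insert_le u (A ∩ B); omega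
      have hv_card : (insert v (A ∩ B)).ncard ≤ k := by
        have := Set.ncard_insert_le v (A ∩ B); omega
      obtain ⟨P, hPc, hPd, hPY, hPS⟩ := ih _ (hlt huv (within_le G A) (fun h => hvA h.2.2))
        (within G A) rfl Y (insert u (A ∩ B)) (by
          intro A' B' hcov' hx2 hY' hS'
          have := hsep (A' ∩ A) (B' ∪ B) (by
              intro w; have := hcov w; have := hcov' w; simp; tauto) (by
              intro a b hab
              by_contra hcon
              have hu' : u ∈ B' := hS' (by simp)
              rcases hx' a b hab with (h | h) | ⟨rfl, rfl⟩ | ⟨rfl, rfl⟩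
              · rcases hx2 a b ⟨hab, h.1, h.2⟩ with h' | h' <;> (simp at hcon; tauto)
              · simp at hcon; tauto
              · simp at hcon; tauto
              · simp at hcon; tauto) (fun y hy => ⟨hY' hy, hYA hy⟩)
              (fun z hz => Or.inr (hZB hz))
          refine this.trans (Set.ncard_le_ncard ?_ (Set.toFinite _))
          rintro w ⟨⟨h1, h2⟩, h3 | h3⟩
          · exact ⟨h1, h3⟩
          · exact ⟨h1, hS' (Or.inr ⟨h2, h3⟩)⟩)
      obtain ⟨Q, hQc, hQd, hQS, hQZ⟩ := ih _ (hlt huv (within_le G B) (fun h => huB h.2.1))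
        (within G B) rfl (insert v (A ∩ B)) Z (by
          intro A' B' hcov' hx2 hS' hZ'
          have := hsep (A' ∪ A) (B' ∩ B) (by
              intro w; have := hcov w; have := hcov' w; simp; tauto) (by
              intro a b hab
              by_contra hcon
              have hv' : v ∈ A' := hS' (by simp)
              rcases hx' a b hab with (h | h) | ⟨rfl, rfl⟩ | ⟨rfl, rfl⟩
              · simp at hcon; tauto
              · rcases hx2 a b ⟨hab, h.1, h.2⟩ with h' | h' <;> (simp at hcon; tauto)
              · simp at hcon; tauto
              · simp at hcon; tauto) (fun y hy => Or.inr (hYA hy))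
              (fun z hz => ⟨hZ' hz, hZB hz⟩)
          refine this.trans (Set.ncard_le_ncard ?_ (Set.toFinite _))
          rintro w ⟨h3 | h3, ⟨h1, h2⟩⟩
          · exact ⟨h3, h1⟩
          · exact ⟨hS' (Or.inr ⟨h3, h2⟩), h1⟩)
      have hPA : ∀ i, P i ⊆ A := fun i => by
        obtain ⟨y, hy, hyY⟩ := hPY i
        exact within_sub (hPc i) hy (hYA hyY)
      have hQB : ∀ i, Q i ⊆ B := fun i => by
        obtain ⟨y, hy, hyY⟩ := hQZ i
        exact within_sub (hQc i) hy (hZB hyY)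
      choose s hsP hsS using hPS
      choose t htQ htS using hQS
      have hsurj : ∀ (S : Set V) (r : Fin k → V), (∀ i, r i ∈ S) → Function.Injective r →
          S.ncard ≤ k → ∀ w ∈ S, ∃ i, r i = w := by
        intro S r hr hinj hc w hw
        have h1 : Set.range r ⊆ S := by rintro _ ⟨i, rfl⟩; exact hr i
        have h2 : (Set.range r).ncard = k := by
          rw [← Set.image_univ, Set.ncard_image_of_injective _ hinj]; simp
        have := Set.eq_of_subset_of_ncard_le h1 (by omega) (Set.toFinite _)
        rw [← this] at hw
        exact hw
      have hsinj : Function.Injective s := fun i j h => hPd i j (s i) (hsP i) (h ▸ hsP j)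
      have htinj : Function.Injective t := fun i j h => hQd i j (t i) (htQ i) (h ▸ htQ j)
      have hssurj := hsurj _ s hsS hsinj hu_card
      have htsurj := hsurj _ t htS htinj hv_card
      classical
      have hj : ∀ i, ∃ j, t j = if s i = u then v else s i := by
        intro i
        apply htsurj
        split_ifs with h
        · simp
        · exact Or.inr ((hsS i).resolve_left h)
      choose j hj using hj
      have hjinj : Function.Injective j := by
        intro a b hab
        apply hsinj
        have h1 := hj a
        have h2 := hj b
        rw [hab, h2] at h1
        have hvS : ∀ i, s i ≠ v := fun i h => hvA (hPA i (h ▸ hsP i))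
        split_ifs at h1 with h3 h4 h4
        · rw [h3, h4]
        · exact absurd h1.symm (hvS _)
        · exact absurd h1 (hvS _)
        · exact h1.symm
      have hcomm : ∀ a b w, w ∈ P a → w ∈ Q b → b = j a := by
        intro a b w ha hb
        have hwS : w ∈ A ∩ B := ⟨hPA a ha, hQB b hb⟩
        obtain ⟨a', ha'⟩ := hssurj w (Or.inr hwS)
        obtain ⟨b', hb'⟩ := htsurj w (Or.inr hwS)
        have e1 : a = a' := hPd _ _ w ha (ha' ▸ hsP a')
        have e2 : b = b' := hQd _ _ w hb (hb' ▸ htQ b')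
        subst e1 e2
        apply htinj
        rw [hj, ha', hb', if_neg]
        rintro rfl
        exact huB hwS.2
      refine ⟨fun i => P i ∪ Q (j i), fun i => ?_, ?_, fun i => ?_, fun i => ?_⟩
      · have h1 : Cn G (P i) := (hPc i).mono fun a _ b _ h => h.1
        have h2 : Cn G (Q (j i)) := (hQc (j i)).mono fun a _ b _ h => h.1
        have h3 := hj i
        split_ifs at h3 with h
        · exact h1.union_adj h2 (h ▸ hsP i) (h3 ▸ htQ (j i)) huv
        · exact h1.union h2 (hsP i) (h3 ▸ htQ (j i))
      · rintro a b w (ha | ha) (hb | hb)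
        · exact hPd _ _ _ ha hb
        · exact hjinj (hcomm _ _ _ ha hb).symm
        · exact hjinj (hcomm _ _ _ hb ha)
        · exact hjinj (hQd _ _ _ ha hb)
      · obtain ⟨y, h1, h2⟩ := hPY i
        exact ⟨y, Or.inl h1, h2⟩
      · obtain ⟨y, h1, h2⟩ := hQZ (j i)
        exact ⟨y, Or.inr h1, h2⟩

end R5


namespace R5
open SimpleGraph

/-- A minor model of `J` in `G`. -/
structure Mdl {V W : Type*} (J : SimpleGraph W) (G : SimpleGraph V) (μ : W → Set V) : Prop where
  ne : ∀ w, ∃ v, v ∈ μ w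
  cn : ∀ w, Cn G (μ w)
  dj : ∀ w w' v, v ∈ μ w → v ∈ μ w' → w = w'
  adj : ∀ w w', J.Adj w w' → ∃ a ∈ μ w, ∃ b ∈ μ w', G.Adj a b

/-- No separation of order at most two separates the closed neighbourhood of `x` from a bag. -/
def Tied {V W : Type*} (G : SimpleGraph V) (x : V) (μ : W → Set V) : Prop :=
  ∀ A B : Set V, (∀ v, v ∈ A ∨ v ∈ B) → NoCross G A B → x ∈ A → (∀ y, G.Adj x y → y ∈ A) →
    (A ∩ B).ncard ≤ 2 → ∀ w, ∃ v ∈ μ w, v ∈ A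

/-- A `K₂,₃` model in `G - x` rooted at the neighbours of `x`. -/
def Good {V : Type*} (G : SimpleGraph V) (x : V) : Prop :=
  ∃ (A : Fin 2 → Set V) (C : Fin 3 → Set V),
    (∀ j, Cn G (A j)) ∧ (∀ i, Cn G (C i)) ∧ (∀ j, x ∉ A j) ∧ (∀ i, x ∉ C i) ∧
    (∀ j j' v, v ∈ A j → v ∈ A j' → j = j') ∧ (∀ i i' v, v ∈ C i → v ∈ C i' → i = i') ∧
    (∀ j i v, v ∈ A j → v ∉ C i) ∧ (∀ i, ∃ y ∈ C i, G.Adj x y) ∧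
    (∀ j i, ∃ a ∈ A j, ∃ c ∈ C i, G.Adj a c)

/-- Every edge not at `x` and not inside the neighbourhood of `x` joins two different bags. -/
def Irred {V W : Type*} (G : SimpleGraph V) (x : V) (μ : W → Set V) : Prop :=
  ∀ u v, G.Adj u v → u ≠ x → v ≠ x → ¬ (G.Adj x u ∧ G.Adj x v) →
    ∃ w w', w ≠ w' ∧ u ∈ μ w ∧ v ∈ μ w'

/-- The contraction map. -/
noncomputable def cf {V : Type*} (u v : V) (a : V) : V := by
  classical exact if a = v then u else a

lemma cf_self {V : Type*} (u v : V) : cf u v v = u := by simp [cf]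
lemma cf_ne {V : Type*} {u v a : V} (h : a ≠ v) : cf u v a = a := by simp [cf, h]
lemma cf_eq {V : Type*} {u v a b : V} (h : cf u v a = cf u v b) :
    a = b ∨ (a = u ∧ b = v) ∨ (a = v ∧ b = u) := by
  unfold cf at h
  split_ifs at h <;> simp_all

/-- Contract `v` into `u`. -/
def ctr {V : Type*} (G : SimpleGraph V) (u v : V) : SimpleGraph V where
  Adj p q := p ≠ q ∧ ∃ a b, G.Adj a b ∧ cf u v a = p ∧ cf u v b = q
  symm := ⟨fun _ _ h => ⟨h.1.symm, by
    obtain ⟨_, a, b, h1, h2, h3⟩ := h; exact ⟨b, a, h1.symm, h3, h2⟩⟩⟩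
  loopless := ⟨fun _ h => h.1 rfl⟩

lemma ctr_nbr {V : Type*} {G : SimpleGraph V} {u v x : V} (hu : u ≠ x) (hv : v ≠ x)
    (hxv : ¬ G.Adj x v) (q : V) : (ctr G u v).Adj x q ↔ G.Adj x q := by
  constructor
  · rintro ⟨_, a, b, hab, ha, rfl⟩
    have hax : a = x := by
      by_cases h : a = v
      · subst h; rw [cf_self] at ha; exact absurd ha hu
      · rwa [cf_ne h] at ha
    subst hax
    have : b ≠ v := by rintro rfl; exact hxv hab
    rwa [cf_ne this]
  · intro h
    refine ⟨h.ne, x, q, h, cf_ne hv.symm, cf_ne ?_⟩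
    rintro rfl; exact hxv h

lemma ctr_pre {V : Type*} {G : SimpleGraph V} {u v : V} (huv : G.Adj u v) {C : Set V}
    (hC : Cn (ctr G u v) C) : Cn G {a | cf u v a ∈ C} := by
  intro T hT hcl
  have hsat : ∀ a b, cf u v a ∈ C → a ∈ T → cf u v a = cf u v b → b ∈ T := by
    intro a b ha haT hab
    rcases cf_eq hab with h | ⟨rfl, rfl⟩ | ⟨rfl, rfl⟩
    · exact h ▸ haT
    · exact hcl _ ha haT _ (by simpa [← hab] using ha) huv
    · exact hcl _ ha haT _ (by simpa [← hab] using ha) huv.symm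
  have key := hC {p | ∃ a ∈ T, cf u v a = p} (by
      obtain ⟨t, ht, htT⟩ := hT
      exact ⟨cf u v t, ht, t, htT, rfl⟩) (by
      rintro p hp ⟨a, haT, rfl⟩ q hq ⟨_, a', b', hab, ha', rfl⟩
      have : a' ∈ T := hsat a a' hp haT ha'.symm
      exact ⟨b', hcl a' (by simpa [ha'] using hp) this b' hq hab, rfl⟩)
  intro b hb
  obtain ⟨a, haT, hab⟩ := key hb
  exact hsat a b (by rw [hab]; exact hb) haT hab

lemma ctr_good {V : Type*} {G : SimpleGraph V} {u v x : V} (huv : G.Adj u v) (hu : u ≠ x)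
    (hv : v ≠ x) (hxv : ¬ G.Adj x v) (h : Good (ctr G u v) x) : Good G x := by
  obtain ⟨A, C, h1, h2, h3, h4, h5, h6, h7, h8, h9⟩ := h
  refine ⟨fun j => {a | cf u v a ∈ A j}, fun i => {a | cf u v a ∈ C i},
    fun j => ctr_pre huv (h1 j), fun i => ctr_pre huv (h2 i), fun j => ?_, fun i => ?_,
    fun j j' w => h5 j j' _, fun j j' w => h6 j j' _, fun j i w => h7 j i _, fun i => ?_,
    fun j i => ?_⟩
  · simpa [cf_ne hv.symm] using h3 j
  · simpa [cf_ne hv.symm] using h4 i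
  · obtain ⟨y, hy, hxy⟩ := h8 i
    rw [ctr_nbr hu hv hxv] at hxy
    refine ⟨y, ?_, hxy⟩
    have : y ≠ v := by rintro rfl; exact hxv hxy
    simpa [cf_ne this] using hy
  · obtain ⟨a, ha, c, hc, _, a', c', hac, rfl, rfl⟩ := h9 j i
    exact ⟨a', ha, c', hc, hac⟩

lemma ctr_mdl {V W : Type*} {J : SimpleGraph W} {G : SimpleGraph V} {μ : W → Set V} {u v : V}
    (h : Mdl J G μ) (hb : ∀ w w', u ∈ μ w → v ∈ μ w' → w = w') :
    Mdl J (ctr G u v) (fun w => cf u v '' μ w) := by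
  have hdj : ∀ w w' a b, a ∈ μ w → b ∈ μ w' → cf u v a = cf u v b → w = w' := by
    intro w w' a b ha hb' hab
    rcases cf_eq hab with h' | ⟨rfl, rfl⟩ | ⟨rfl, rfl⟩
    · subst h'; exact h.dj _ _ _ ha hb'
    · exact hb _ _ ha hb'
    · exact (hb _ _ hb' ha).symm
  refine ⟨fun w => ?_, fun w => ?_, ?_, fun w w' hww => ?_⟩
  · obtain ⟨a, ha⟩ := h.ne w
    exact ⟨_, a, ha, rfl⟩
  · rintro T ⟨_, ⟨t, ht, rfl⟩, htT⟩ hcl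
    have := h.cn w {a | cf u v a ∈ T} ⟨t, ht, htT⟩ (by
      intro a ha haT b hb' hab
      by_cases he : cf u v a = cf u v b
      · simpa [← he] using haT
      · exact hcl _ ⟨a, ha, rfl⟩ haT _ ⟨b, hb', rfl⟩ ⟨he, a, b, hab, rfl, rfl⟩)
    rintro _ ⟨a, ha, rfl⟩
    exact this ha
  · rintro w w' _ ⟨a, ha, rfl⟩ ⟨b, hb', hab⟩
    exact hdj _ _ _ _ ha hb' hab.symm
  · obtain ⟨a, ha, b, hb', hab⟩ := h.adj w w' hww
    refine ⟨_, ⟨a, ha, rfl⟩, _, ⟨b, hb', rfl⟩, fun he => ?_, a, b, hab, rfl, rfl⟩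
    exact hww.ne (hdj _ _ _ _ ha hb' he)

lemma ctr_support {V : Type*} [Finite V] {G : SimpleGraph V} {u v : V} (huv : G.Adj u v) :
    (ctr G u v).support.ncard < G.support.ncard := by
  have hvn : v ∉ (ctr G u v).support := by
    rintro ⟨q, _, a, b, hab, ha, rfl⟩
    by_cases h : a = v
    · subst h; rw [cf_self] at ha; exact huv.ne ha
    · rw [cf_ne h] at ha; exact h ha
  apply Set.ncard_lt_ncard _ (Set.toFinite _)
  refine ⟨?_, fun h => hvn (h ⟨u, huv.symm⟩)⟩
  rintro p ⟨q, _, a, b, hab, rfl, rfl⟩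
  by_cases h : a = v
  · subst h; rw [cf_self]; exact ⟨_, huv⟩
  · rw [cf_ne h]; exact ⟨_, hab⟩

/-- The piece `G[B]` with `x` joined to `Z`. -/
def rst {V : Type*} (G : SimpleGraph V) (x : V) (Z B : Set V) (hx : x ∉ Z) : SimpleGraph V where
  Adj a b := (G.Adj a b ∧ a ∈ B ∧ b ∈ B) ∨ (a = x ∧ b ∈ Z) ∨ (b = x ∧ a ∈ Z)
  symm := ⟨fun a b h => by
    rcases h with h | h | h
    · exact Or.inl ⟨h.1.symm, h.2.2, h.2.1⟩
    · exact Or.inr (Or.inr h)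
    · exact Or.inr (Or.inl h)⟩
  loopless := ⟨fun a h => by
    rcases h with h | ⟨rfl, h⟩ | ⟨rfl, h⟩
    · exact G.loopless.irrefl _ h.1
    · exact hx h
    · exact hx h⟩

lemma rst_nbr {V : Type*} {G : SimpleGraph V} {x : V} {Z B : Set V} {hx : x ∉ Z} (hB : x ∉ B)
    (b : V) : (rst G x Z B hx).Adj x b ↔ b ∈ Z := by
  constructor
  · rintro (h | h | ⟨rfl, h⟩)
    · exact absurd h.2.1 hB
    · exact h.2
    · exact h
  · intro h; exact Or.inr (Or.inl ⟨rfl, h⟩)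

lemma rst_mdl {V W : Type*} {J : SimpleGraph W} {G : SimpleGraph V} {μ : W → Set V} {x u v t : V}
    {A B : Set V} (h : Mdl J G μ) (hb : ∀ w w', u ∈ μ w → v ∈ μ w' → w = w')
    (hcov : ∀ v, v ∈ A ∨ v ∈ B)
    (hxB : x ∉ B) (hcr : NoCross G A B) (hmeet : ∀ w, ∃ a ∈ μ w, a ∈ B)
    (hZ : A ∩ B = {u, v, t}) (hx : x ∉ A ∩ B) :
    Mdl J (rst G x (A ∩ B) B hx)
      (fun w => (μ w ∩ B) ∪ {a | a = x ∧ (u ∈ μ w ∨ v ∈ μ w)}) := by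
  have huZ : u ∈ A ∩ B := by rw [hZ]; simp
  have hvZ : v ∈ A ∩ B := by rw [hZ]; simp
  have hcases : ∀ z ∈ A ∩ B, z = u ∨ z = v ∨ z = t := by
    intro z hz; rw [hZ] at hz; simpa using hz
  refine ⟨fun w => ?_, fun w => ?_, ?_, fun w w' hww => ?_⟩
  · obtain ⟨a, ha, haB⟩ := hmeet w
    exact ⟨a, Or.inl ⟨ha, haB⟩⟩
  · intro T hT hcl
    by_cases huv : u ∈ μ w ∨ v ∈ μ w
    · have hadjx : ∀ z ∈ A ∩ B, (rst G x (A ∩ B) B hx).Adj x z := fun z hz =>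
        (rst_nbr hxB z).2 hz
      have hzx : ∀ z ∈ A ∩ B, z ∈ μ w → (z ∈ T ↔ x ∈ T) := by
        intro z hz hzw
        constructor
        · intro hzT
          exact hcl z (Or.inl ⟨hzw, hz.2⟩) hzT x (Or.inr ⟨rfl, huv⟩) (hadjx z hz).symm
        · intro hxT
          exact hcl x (Or.inr ⟨rfl, huv⟩) hxT z (Or.inl ⟨hzw, hz.2⟩) (hadjx z hz)
      obtain ⟨z, hz, hzw⟩ : ∃ z ∈ A ∩ B, z ∈ μ w := by
        rcases huv with h | h
        · exact ⟨u, huZ, h⟩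
        · exact ⟨v, hvZ, h⟩
      have key := h.cn w {a | (a ∈ B ∧ a ∈ T) ∨ (a ∉ B ∧ x ∈ T)} (by
        obtain ⟨p, hp | hp, hpT⟩ := hT
        · exact ⟨p, hp.1, Or.inl ⟨hp.2, hpT⟩⟩
        · rw [hp.1] at hpT
          exact ⟨z, hzw, Or.inl ⟨hz.2, (hzx z hz hzw).2 hpT⟩⟩) (by
        rintro a ha (⟨haB, haT⟩ | ⟨haB, hxT⟩) b hbw hab
        · by_cases hbB : b ∈ B
          · exact Or.inl ⟨hbB, hcl a (Or.inl ⟨ha, haB⟩) haT b (Or.inl ⟨hbw, hbB⟩)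
              (Or.inl ⟨hab, haB, hbB⟩)⟩
          · have haA : a ∈ A := by rcases hcr a b hab with h | h; exacts [h.1, absurd h.2 hbB]
            exact Or.inr ⟨hbB, (hzx a ⟨haA, haB⟩ ha).1 haT⟩
        · by_cases hbB : b ∈ B
          · have hbA : b ∈ A := by rcases hcr a b hab with h | h; exacts [h.2, absurd h.1 haB]
            exact Or.inl ⟨hbB, (hzx b ⟨hbA, hbB⟩ hbw).2 hxT⟩
          · exact Or.inr ⟨hbB, hxT⟩)
      have hBT : ∀ a ∈ μ w, a ∈ B → a ∈ T := by
        intro a ha haB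
        rcases key ha with h | h
        · exact h.2
        · exact absurd haB h.1
      rintro a (ha | ⟨rfl, _⟩)
      · exact hBT a ha.1 ha.2
      · exact (hzx z hz hzw).1 (hBT z hzw hz.2)
    · have ht : ∀ z ∈ A ∩ B, z ∈ μ w → z = t := by
        intro z hz hzw
        rcases hcases z hz with rfl | rfl | rfl
        · exact absurd (Or.inl hzw) huv
        · exact absurd (Or.inr hzw) huv
        · rfl
      have key := h.cn w {a | (a ∈ B ∧ a ∈ T) ∨ (a ∉ B ∧ t ∈ T)} (by
        obtain ⟨p, hp | hp, hpT⟩ := hT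
        · exact ⟨p, hp.1, Or.inl ⟨hp.2, hpT⟩⟩
        · exact absurd hp.2 huv) (by
        rintro a ha (⟨haB, haT⟩ | ⟨haB, hxT⟩) b hbw hab
        · by_cases hbB : b ∈ B
          · exact Or.inl ⟨hbB, hcl a (Or.inl ⟨ha, haB⟩) haT b (Or.inl ⟨hbw, hbB⟩)
              (Or.inl ⟨hab, haB, hbB⟩)⟩
          · have haA : a ∈ A := by rcases hcr a b hab with h | h; exacts [h.1, absurd h.2 hbB]
            exact Or.inr ⟨hbB, (ht a ⟨haA, haB⟩ ha) ▸ haT⟩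
        · by_cases hbB : b ∈ B
          · have hbA : b ∈ A := by rcases hcr a b hab with h | h; exacts [h.2, absurd h.1 haB]
            exact Or.inl ⟨hbB, (ht b ⟨hbA, hbB⟩ hbw).symm ▸ hxT⟩
          · exact Or.inr ⟨hbB, hxT⟩)
      rintro a (ha | ⟨rfl, h⟩)
      · rcases key ha.1 with h | h
        · exact h.2
        · exact absurd ha.2 h.1
      · exact absurd h huv
  · rintro w w' a (ha | ⟨hxa, ha⟩) (ha' | ⟨hxa', ha'⟩)
    · exact h.dj _ _ _ ha.1 ha'.1
    · exact absurd ha.2 (hxa' ▸ hxB)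
    · exact absurd ha'.2 (hxa ▸ hxB)
    · rcases ha with ha | ha <;> rcases ha' with ha' | ha'
      · exact h.dj _ _ _ ha ha'
      · exact hb _ _ ha ha'
      · exact (hb _ _ ha' ha).symm
      · exact h.dj _ _ _ ha ha'
  · obtain ⟨a, ha, b, hb', hab⟩ := h.adj w w' hww
    by_cases hc : a ∈ B ∧ b ∈ B
    · exact ⟨a, Or.inl ⟨ha, hc.1⟩, b, Or.inl ⟨hb', hc.2⟩, Or.inl ⟨hab, hc⟩⟩
    · have hA : a ∈ A ∧ b ∈ A := (hcr a b hab).resolve_right hc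
      obtain ⟨p, hp, hpB⟩ := hmeet w
      obtain ⟨q, hq, hqB⟩ := hmeet w'
      obtain ⟨z, hz, hzA⟩ := (h.cn w).meets hcr ha hA.1 hp hpB
      obtain ⟨z', hz', hzA'⟩ := (h.cn w').meets hcr hb' hA.2 hq hqB
      by_cases h1 : u ∈ μ w ∨ v ∈ μ w
      · exact ⟨x, Or.inr ⟨rfl, h1⟩, z', Or.inl ⟨hz', hzA'.2⟩, (rst_nbr hxB _).2 hzA'⟩
      by_cases h2 : u ∈ μ w' ∨ v ∈ μ w'
      · exact ⟨z, Or.inl ⟨hz, hzA.2⟩, x, Or.inr ⟨rfl, h2⟩, ((rst_nbr hxB _).2 hzA).symm⟩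
      exfalso
      have e1 : z = t := by
        rcases hcases z hzA with rfl | rfl | rfl <;> tauto
      have e2 : z' = t := by
        rcases hcases z' hzA' with rfl | rfl | rfl <;> tauto
      subst e1; subst e2
      exact hww.ne (h.dj _ _ _ hz hz')

end R5


namespace R5
open SimpleGraph

lemma surj_of_card {V : Type*} [Finite V] {k : ℕ} {S : Set V} {r : Fin k → V}
    (hr : ∀ i, r i ∈ S) (hinj : Function.Injective r)
    (hc : S.ncard ≤ k) : ∀ w ∈ S, ∃ i, r i = w := by
  intro w hw
  have h1 : Set.range r ⊆ S := by rintro _ ⟨i, rfl⟩; exact hr i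
  have h2 : (Set.range r).ncard = k := by
    rw [← Set.image_univ, Set.ncard_image_of_injective _ hinj]; simp
  have := Set.eq_of_subset_of_ncard_le h1 (by omega) (Set.toFinite _)
  rw [← this] at hw
  exact hw

lemma exists_third {V : Type*} [Finite V] {S : Set V} {u v : V} (hu : u ∈ S) (hv : v ∈ S)
    (huv : u ≠ v) (hc : S.ncard = 3) : ∃ t, S = {u, v, t} := by
  have h1 : (S \ {u, v}).ncard = 1 := by
    rw [Set.ncard_sdiff (by rintro a (rfl | rfl) <;> assumption) (Set.toFinite _), hc,
      Set.ncard_pair huv]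
  obtain ⟨t, ht⟩ := Set.ncard_eq_one.1 h1
  refine ⟨t, ?_⟩
  ext a
  have : a ∈ S \ {u, v} ↔ a = t := by rw [ht]; rfl
  simp only [Set.mem_diff, Set.mem_insert_iff, Set.mem_singleton_iff] at this ⊢
  by_cases h1 : a = u
  · subst h1; simp [hu]
  by_cases h2 : a = v
  · subst h2; simp [hv]
  tauto

lemma step {V W : Type*} [Finite V] {J : SimpleGraph W}
    (hJ : ∀ w w', w ≠ w' → ¬ J.Adj w w' → ∃ c : Fin 3 → W, Function.Injective c ∧
      ∀ i, J.Adj w (c i) ∧ J.Adj w' (c i))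
    {G : SimpleGraph V} {μ : W → Set V} {x u v : V}
    (h : Mdl J G μ) (hN : (G.neighborSet x).ncard = 3) (hT : Tied G x μ)
    (huv : G.Adj u v) (hxv : ¬ G.Adj x v)
    (hb : ∀ w w', u ∈ μ w → v ∈ μ w' → w = w')
    {A B : Set V} (hcov : ∀ v, v ∈ A ∨ v ∈ B) (hcr : NoCross G A B) (hxA : x ∈ A)
    (hNA : ∀ y, G.Adj x y → y ∈ A) (hxB : x ∉ B) (huZ : u ∈ A ∩ B) (hvZ : v ∈ A ∩ B)
    (hc : (A ∩ B).ncard ≤ 3) (w0 : W) (hw0 : ∀ a ∈ μ w0, a ∉ A)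
    (ih : ∀ (G' : SimpleGraph V) (μ' : W → Set V), G'.support.ncard < G.support.ncard →
      (G'.neighborSet x).ncard = 3 → Mdl J G' μ' → Tied G' x μ' → Good G' x) :
    Good G x := by
  have hc3 : (A ∩ B).ncard = 3 := by
    by_contra hne
    obtain ⟨a, ha, haA⟩ := hT A B hcov hcr hxA hNA (by omega) w0
    exact hw0 a ha haA
  obtain ⟨t, hZ⟩ := exists_third huZ hvZ huv.ne hc3
  have hmeet : ∀ w, ∃ a ∈ μ w, a ∈ B := by
    intro w
    by_contra hno
    push Not at hno
    have hne : w ≠ w0 := by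
      rintro rfl
      obtain ⟨a, ha⟩ := h.ne w
      rcases hcov a with h' | h'
      · exact hw0 a ha h'
      · exact hno a ha h'
    have hnadj : ¬ J.Adj w w0 := by
      intro hadj
      obtain ⟨a, ha, b, hb', hab⟩ := h.adj _ _ hadj
      rcases hcr a b hab with h' | h'
      · exact hw0 b hb' h'.2
      · exact hno a ha h'.1
    obtain ⟨c, hcinj, hc⟩ := hJ w w0 hne hnadj
    have hz : ∀ i, ∃ z ∈ μ (c i), z ∈ A ∧ z ∈ B := by
      intro i
      obtain ⟨a, ha, b, hb1, hab⟩ := h.adj _ _ (hc i).1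
      obtain ⟨a', ha', b', hb1', hab'⟩ := h.adj _ _ (hc i).2
      refine (h.cn (c i)).meets hcr hb1 (?_ : b ∈ A) hb1' (?_ : b' ∈ B)
      · rcases hcr a b hab with h' | h'
        · exact h'.2
        · exact absurd h'.1 (hno a ha)
      · rcases hcr a' b' hab' with h' | h'
        · exact absurd h'.1 (hw0 a' ha')
        · exact h'.2
    choose z hzc hzZ using hz
    have hzinj : Function.Injective z := fun i j hij =>
      hcinj (h.dj _ _ (z i) (hzc i) (hij ▸ hzc j))
    obtain ⟨i, hi⟩ := surj_of_card (S := A ∩ B) hzZ hzinj hc3.le u huZ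
    obtain ⟨j, hj⟩ := surj_of_card (S := A ∩ B) hzZ hzinj hc3.le v hvZ
    have : c i = c j := hb _ _ (hi ▸ hzc i) (hj ▸ hzc j)
    have := hcinj this
    subst this
    exact huv.ne (hi.symm.trans hj)
  obtain ⟨P, hPc, hPd, hPY, hPZ⟩ := menger 3 _ (within G (A \ {x})) rfl (G.neighborSet x) (A ∩ B)
    (by
      intro A' B' hcov' hcr' hY' hZ'
      by_contra hlt
      obtain ⟨a, ha, haA⟩ := hT ((A' ∩ A) ∪ {x}) ((B' ∪ B) \ {x}) (by
          intro w
          by_cases hwx : w = x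
          · left; right; exact hwx
          · have := hcov w; have := hcov' w; simp [hwx]; tauto) (by
          intro a b hab
          by_cases hax : a = x
          · subst hax
            exact Or.inl ⟨Or.inr rfl, Or.inl ⟨hY' hab, hNA b hab⟩⟩
          by_cases hbx : b = x
          · subst hbx
            exact Or.inl ⟨Or.inl ⟨hY' hab.symm, hNA a hab.symm⟩, Or.inr rfl⟩
          rcases hcr a b hab with h' | h'
          · rcases hcr' a b ⟨hab, ⟨h'.1, hax⟩, ⟨h'.2, hbx⟩⟩ with h2 | h2
            · exact Or.inl ⟨Or.inl ⟨h2.1, h'.1⟩, Or.inl ⟨h2.2, h'.2⟩⟩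
            · exact Or.inr ⟨⟨Or.inl h2.1, hax⟩, ⟨Or.inl h2.2, hbx⟩⟩
          · exact Or.inr ⟨⟨Or.inr h'.1, hax⟩, ⟨Or.inr h'.2, hbx⟩⟩) (Or.inr rfl)
          (fun y hy => Or.inl ⟨hY' hy, hNA y hy⟩) (by
          have : ((A' ∩ A) ∪ {x}) ∩ ((B' ∪ B) \ {x}) ⊆ A' ∩ B' := by
            rintro w ⟨⟨h1, h2⟩ | h1, h3 | h3, h4⟩
            · exact ⟨h1, h3⟩
            · exact ⟨h1, hZ' ⟨h2, h3⟩⟩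
            · exact absurd h1 h4
            · exact absurd h1 h4
          have := Set.ncard_le_ncard this (Set.toFinite _)
          omega) w0
      rcases haA with h' | h'
      · exact hw0 a ha h'.2
      · exact hw0 a ha (h' ▸ hxA))
  have hPA : ∀ i, P i ⊆ A \ {x} := fun i => by
    obtain ⟨y, hy, hyY⟩ := hPY i
    exact within_sub (hPc i) hy ⟨hNA y hyY, fun h => G.ne_of_adj hyY h.symm⟩
  have hPG : ∀ i, Cn G (P i) := fun i => (hPc i).mono fun a _ b _ h => h.1
  choose z hzP hzZ using hPZ
  have hzinj : Function.Injective z := fun i j hij => hPd i j (z i) (hzP i) (hij ▸ hzP j)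
  have hzsurj := surj_of_card (S := A ∩ B) hzZ hzinj hc3.le
  have hPuniq : ∀ i a, a ∈ P i → a ∈ B → a = z i := by
    intro i a ha haB
    obtain ⟨j, hj⟩ := hzsurj a ⟨(hPA i ha).1, haB⟩
    have := hPd i j a ha (hj ▸ hzP j)
    rw [this, hj]
  have hxZ : x ∉ A ∩ B := fun h => hxB h.2
  have hzsupp : ∀ i, z i ∈ G.support := by
    intro i
    obtain ⟨y, hy, hyY⟩ := hPY i
    by_contra hns
    have := hPG i {a | a = z i} ⟨z i, hzP i, rfl⟩ (by
      rintro a _ rfl b _ hab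
      exact absurd ⟨b, hab⟩ hns) hy
    have : y = z i := this
    exact hns (this ▸ ⟨x, G.symm.symm _ _ hyY⟩)
  have hG' := ih (rst G x (A ∩ B) B hxZ)
    (fun w => (μ w ∩ B) ∪ {a | a = x ∧ (u ∈ μ w ∨ v ∈ μ w)}) (by
      apply Set.ncard_lt_ncard _ (Set.toFinite _)
      obtain ⟨y, hy, hyZ⟩ : ∃ y, G.Adj x y ∧ y ∉ A ∩ B := by
        by_contra hno
        push Not at hno
        have hsub : G.neighborSet x ⊆ A ∩ B := fun y hy => hno y hy
        have := Set.eq_of_subset_of_ncard_le hsub (by omega) (Set.toFinite _)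
        exact hxv (this ▸ hvZ : v ∈ G.neighborSet x)
      have hyB : y ∉ B := fun h => hyZ ⟨hNA y hy, h⟩
      refine ⟨?_, fun hsub => ?_⟩
      · rintro a ⟨b, h' | ⟨rfl, h'⟩ | ⟨rfl, h'⟩⟩
        · exact ⟨b, h'.1⟩
        · exact ⟨y, hy⟩
        · obtain ⟨i, rfl⟩ := hzsurj a h'
          exact hzsupp i
      · obtain ⟨b, h' | ⟨rfl, h'⟩ | ⟨rfl, h'⟩⟩ := hsub (⟨x, hy.symm⟩ : y ∈ G.support)
        · exact hyB h'.2.1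
        · exact hy.ne rfl
        · exact hyZ h') (by
      have : (rst G x (A ∩ B) B hxZ).neighborSet x = A ∩ B := by
        ext b; exact rst_nbr (hx := hxZ) hxB b
      rw [this, hc3]) (rst_mdl h hb hcov hxB hcr hmeet hZ hxZ) (by
      intro A' B' hcov' hcr' hx' hN' hc' w
      by_contra hno
      push Not at hno
      have hZA' : ∀ a ∈ A ∩ B, a ∈ A' := fun a ha => hN' a ((rst_nbr hxB a).2 ha)
      obtain ⟨a, ha, haA⟩ := hT (A ∪ A') (B ∩ B') (by
        intro a; have := hcov a; have := hcov' a; simp; tauto) (by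
        intro a b hab
        by_cases hc : a ∈ B ∧ b ∈ B
        · rcases hcr' a b (Or.inl ⟨hab, hc⟩) with h' | h'
          · exact Or.inl ⟨Or.inr h'.1, Or.inr h'.2⟩
          · exact Or.inr ⟨⟨hc.1, h'.1⟩, hc.2, h'.2⟩
        · have := (hcr a b hab).resolve_right hc
          exact Or.inl ⟨Or.inl this.1, Or.inl this.2⟩) (Or.inl hxA)
        (fun y hy => Or.inl (hNA y hy)) (by
        refine le_trans (Set.ncard_le_ncard ?_ (Set.toFinite _)) hc'
        rintro a ⟨h1 | h1, h2, h3⟩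
        · exact ⟨hZA' a ⟨h1, h2⟩, h3⟩
        · exact ⟨h1, h3⟩) w
      have hA' : ∀ b ∈ μ w, b ∈ B → b ∉ A' := fun b hb1 hb2 => hno b (Or.inl ⟨hb1, hb2⟩)
      obtain ⟨b, hbw, hbB⟩ := hmeet w
      have haB : ∃ s ∈ μ w, s ∈ A ∧ s ∈ B := by
        rcases hcov a with h1 | h1
        · exact (h.cn w).meets hcr ha h1 hbw hbB
        · rcases haA with h2 | h2
          · exact ⟨a, ha, h2, h1⟩
          · exact absurd h2 (hA' a ha h1)
      obtain ⟨s, hs, hsZ⟩ := haB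
      exact hA' s hs hsZ.2 (hZA' s hsZ))
  obtain ⟨A1, C1, h1, h2, h3, h4, h5, h6, h7, h8, h9⟩ := hG'
  have hmono : ∀ S : Set V, x ∉ S → Cn (rst G x (A ∩ B) B hxZ) S → Cn G S := by
    intro S hxS hS
    refine hS.mono fun a ha b hb hab => ?_
    rcases hab with h' | ⟨rfl, h'⟩ | ⟨rfl, h'⟩
    · exact h'.1
    · exact absurd ha hxS
    · exact absurd hb hxS
  have hinB : ∀ S : Set V, x ∉ S → Cn (rst G x (A ∩ B) B hxZ) S → (∃ a ∈ S, a ∈ B) → S ⊆ B := by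
    intro S hxS hS hex
    refine hS B hex ?_
    intro a ha haB b hb hab
    rcases hab with h' | ⟨rfl, h'⟩ | ⟨rfl, h'⟩
    · exact h'.2.2
    · exact absurd ha hxS
    · exact absurd hb hxS
  have hadjG : ∀ a b, a ≠ x → b ≠ x → (rst G x (A ∩ B) B hxZ).Adj a b →
      G.Adj a b ∧ a ∈ B ∧ b ∈ B := by
    rintro a b ha hb (h' | ⟨rfl, h'⟩ | ⟨rfl, h'⟩)
    · exact h'
    · exact absurd rfl ha
    · exact absurd rfl hb
  have hA1B : ∀ j, A1 j ⊆ B := by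
    intro j
    obtain ⟨a, ha, c, hc, hac⟩ := h9 j 0
    exact hinB _ (h3 j) (h1 j) ⟨a, ha, (hadjG a c (fun e => h3 j (e ▸ ha))
      (fun e => h4 0 (e ▸ hc)) hac).2.1⟩
  have h8' : ∀ i, ∃ k, z k ∈ C1 i := by
    intro i
    obtain ⟨y, hy, hxy⟩ := h8 i
    rw [rst_nbr hxB] at hxy
    obtain ⟨k, rfl⟩ := hzsurj y hxy
    exact ⟨k, hy⟩
  choose k hk using h8'
  have hC1B : ∀ i, C1 i ⊆ B := fun i =>
    hinB _ (h4 i) (h2 i) ⟨z (k i), hk i, (hzZ (k i)).2⟩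
  refine ⟨A1, fun i => C1 i ∪ P (k i), fun j => hmono _ (h3 j) (h1 j),
    fun i => (hmono _ (h4 i) (h2 i)).union (hPG (k i)) (hk i) (hzP (k i)), h3, ?_, h5, ?_, ?_, ?_,
    ?_⟩
  · rintro i (h' | h')
    · exact h4 i h'
    · exact (hPA _ h').2 rfl
  · rintro i i' a (h' | h') (h'' | h'')
    · exact h6 _ _ _ h' h''
    · have := hPuniq _ a h'' (hC1B i h')
      exact h6 _ _ _ h' (this ▸ hk i')
    · have := hPuniq _ a h' (hC1B i' h'')
      exact h6 _ _ _ (this ▸ hk i) h''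
    · have := hPd _ _ _ h' h''
      exact h6 _ _ (z (k i)) (hk i) (this ▸ hk i')
  · rintro j i a ha (h' | h')
    · exact h7 j i a ha h'
    · have := hPuniq _ a h' (hA1B j ha)
      exact h7 j i a ha (this ▸ hk i)
  · intro i
    obtain ⟨y, hy, hyY⟩ := hPY (k i)
    exact ⟨y, Or.inr hy, hyY⟩
  · intro j i
    obtain ⟨a, ha, c, hc, hac⟩ := h9 j i
    exact ⟨a, ha, c, Or.inl hc, (hadjG a c (fun e => h3 j (e ▸ ha))
      (fun e => h4 i (e ▸ hc)) hac).1⟩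

theorem reduce {V W : Type*} [Finite V] {J : SimpleGraph W}
    (hJ : ∀ w w', w ≠ w' → ¬ J.Adj w w' → ∃ c : Fin 3 → W, Function.Injective c ∧
      ∀ i, J.Adj w (c i) ∧ J.Adj w' (c i)) (x : V)
    (hfinal : ∀ (G : SimpleGraph V) (μ : W → Set V), (G.neighborSet x).ncard = 3 → Mdl J G μ →
      Tied G x μ → Irred G x μ → Good G x) :
    ∀ (n : ℕ) (G : SimpleGraph V) (μ : W → Set V), G.support.ncard = n →
      (G.neighborSet x).ncard = 3 → Mdl J G μ → Tied G x μ → Good G x := by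
  intro n
  induction n using Nat.strong_induction_on with
  | _ n ih =>
  intro G μ hn hN h hT
  by_cases hir : Irred G x μ
  · exact hfinal G μ hN h hT hir
  have : ∃ u v, G.Adj u v ∧ u ≠ x ∧ v ≠ x ∧ ¬ G.Adj x v ∧
      ∀ w w', u ∈ μ w → v ∈ μ w' → w = w' := by
    unfold Irred at hir
    push Not at hir
    obtain ⟨u, v, huv, hu, hv, hxx, hno⟩ := hir
    have hno' : ∀ w w', u ∈ μ w → v ∈ μ w' → w = w' := by
      intro w w' h1 h2
      by_contra hne
      exact hno w w' hne h1 h2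
    by_cases hxv : G.Adj x v
    · refine ⟨v, u, huv.symm, hv, hu, fun h => hxx h hxv, fun w w' h1 h2 => (hno' _ _ h2 h1).symm⟩
    · exact ⟨u, v, huv, hu, hv, hxv, hno'⟩
  obtain ⟨u, v, huv, hu, hv, hxv, hb⟩ := this
  have hctrN : (ctr G u v).neighborSet x = G.neighborSet x := by
    ext q; exact ctr_nbr hu hv hxv q
  have hm := ctr_mdl h hb
  by_cases hT' : Tied (ctr G u v) x (fun w => cf u v '' μ w)
  · exact ctr_good huv hu hv hxv
      (ih _ (hn ▸ ctr_support huv) _ _ rfl (by rw [hctrN, hN]) hm hT')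
  unfold Tied at hT'
  push Not at hT'
  obtain ⟨A, B, hcov, hcr, hxA, hNA, hc, w0, hw0⟩ := hT'
  have hfx : cf u v x = x := cf_ne hv.symm
  have hfy : ∀ y, G.Adj x y → cf u v y = y := fun y hy => cf_ne (by rintro rfl; exact hxv hy)
  have hcr2 : NoCross G {a | cf u v a ∈ A} ({a | cf u v a ∈ B} \ {x}) := by
    intro a b hab
    by_cases hax : a = x
    · subst hax
      exact Or.inl ⟨by simpa [hfx] using hxA, hNA _ ((ctr_nbr hu hv hxv _).2
        (by rwa [hfy _ hab]))⟩
    by_cases hbx : b = x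
    · subst hbx
      exact Or.inl ⟨hNA _ ((ctr_nbr hu hv hxv _).2 (by rw [hfy _ hab.symm]; exact hab.symm)),
        by simpa [hfx] using hxA⟩
    by_cases he : cf u v a = cf u v b
    · rcases hcov (cf u v a) with h' | h'
      · exact Or.inl ⟨h', show cf u v b ∈ A from he ▸ h'⟩
      · exact Or.inr ⟨⟨h', hax⟩, ⟨show cf u v b ∈ B from he ▸ h', hbx⟩⟩
    · rcases hcr _ _ ⟨he, a, b, hab, rfl, rfl⟩ with h' | h'
      · exact Or.inl h'
      · exact Or.inr ⟨⟨h'.1, hax⟩, ⟨h'.2, hbx⟩⟩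
  have hcov2 : ∀ a, a ∈ {a | cf u v a ∈ A} ∨ a ∈ {a | cf u v a ∈ B} \ {x} := by
    intro a
    by_cases hax : a = x
    · left; simpa [hax, hfx] using hxA
    · rcases hcov (cf u v a) with h' | h'
      · exact Or.inl h'
      · exact Or.inr ⟨h', hax⟩
  have hxA2 : x ∈ {a | cf u v a ∈ A} := by simpa [hfx] using hxA
  have hNA2 : ∀ y, G.Adj x y → y ∈ {a | cf u v a ∈ A} := by
    intro y hy
    have := hNA y ((ctr_nbr hu hv hxv _).2 hy)
    simpa [hfy y hy] using this
  have hw02 : ∀ a ∈ μ w0, a ∉ {a | cf u v a ∈ A} := fun a ha => hw0 _ ⟨a, ha, rfl⟩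
  have hvuf : cf u v u = u := cf_ne huv.ne
  by_cases huZ : u ∈ A ∧ u ∈ B
  · refine step hJ h hN hT huv hxv hb hcov2 hcr2 hxA2 hNA2 (fun h => h.2 rfl) ?_ ?_ ?_ w0 hw02 ?_
    · exact ⟨by simpa [hvuf] using huZ.1, by simpa [hvuf] using huZ.2, hu⟩
    · exact ⟨by simpa [cf_self] using huZ.1, by simpa [cf_self] using huZ.2, hv⟩
    · have : {a | cf u v a ∈ A} ∩ ({a | cf u v a ∈ B} \ {x}) ⊆ insert v (A ∩ B) := by
        rintro a ⟨h1, h2, _⟩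
        by_cases hav : a = v
        · exact Or.inl hav
        · simp only [Set.mem_setOf_eq, cf_ne hav] at h1 h2
          exact Or.inr ⟨h1, h2⟩
      have := Set.ncard_le_ncard this (Set.toFinite _)
      have := Set.ncard_insert_le v (A ∩ B)
      omega
    · intro G' μ' hlt
      exact ih _ (hn ▸ hlt) G' μ' rfl
  · exfalso
    obtain ⟨a, ha, haA⟩ := hT _ _ hcov2 hcr2 hxA2 hNA2 (by
      refine le_trans (Set.ncard_le_ncard ?_ (Set.toFinite _)) hc
      rintro a ⟨h1, h2, _⟩
      by_cases hav : a = v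
      · subst hav
        simp only [Set.mem_setOf_eq, cf_self] at h1 h2
        exact absurd ⟨h1, h2⟩ huZ
      · simp only [Set.mem_setOf_eq, cf_ne hav] at h1 h2
        exact ⟨h1, h2⟩) w0
    exact hw02 a ha haA

end R5


namespace R5
open SimpleGraph

/-- The combinatorial data of an irreducible configuration. -/
structure Cmb {W : Type*} (J : SimpleGraph W) (β : Fin 3 → W) (E : Fin 3 → W → Prop) : Prop where
  out : ∀ i w, E i w → ∀ j, β j ≠ w
  att : ∀ w i, (∀ j, β j ≠ w) → J.Adj w (β i) → ∃ j, β j = β i ∧ E j w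
  mat : ∀ a b c : W, a ≠ b → a ≠ c → b ≠ c → (∀ j, β j ≠ a) → (∀ j, β j ≠ b) →
    (∀ j, β j ≠ c) → ∃ m : Fin 3 → W, Function.Injective m ∧ ∀ i, E i (m i)

def Con {W : Type*} (J : SimpleGraph W) (E : Fin 3 → W → Prop) (i : Fin 3) : List W → Prop
  | [] => True
  | [t] => E i t
  | [t, u] => E i t ∧ J.Adj t u
  | _ => False

def Att {W : Type*} (J : SimpleGraph W) (E : Fin 3 → W → Prop) (p : W) (i : Fin 3)
    (L : List W) : Prop := E i p ∨ ∃ t ∈ L, J.Adj p t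

def CG {W : Type*} (J : SimpleGraph W) (β : Fin 3 → W) (E : Fin 3 → W → Prop) : Prop :=
  ∃ (i j k : Fin 3) (p q : W) (L1 L2 L3 : List W), i ≠ j ∧ i ≠ k ∧ j ≠ k ∧
    (p :: q :: (L1 ++ L2 ++ L3)).Nodup ∧ (∀ w ∈ p :: q :: (L1 ++ L2 ++ L3), ∀ j, β j ≠ w) ∧
    Con J E i L1 ∧ Con J E j L2 ∧ Con J E k L3 ∧
    Att J E p i L1 ∧ Att J E p j L2 ∧ Att J E p k L3 ∧
    Att J E q i L1 ∧ Att J E q j L2 ∧ Att J E q k L3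

lemma fin3_cases {i j k : Fin 3} (h1 : i ≠ j) (h2 : i ≠ k) (h3 : j ≠ k) (l : Fin 3) :
    l = i ∨ l = j ∨ l = k := by
  revert i j k l; decide

/-- Trichotomy for three labels. -/
lemma patt {W : Type*} (β : Fin 3 → W) :
    Function.Injective β ∨ (∃ i j k : Fin 3, i ≠ j ∧ i ≠ k ∧ j ≠ k ∧ β i = β j ∧ β i ≠ β k) ∨
    (∃ a, ∀ i, β i = a) := by
  by_cases h01 : β 0 = β 1
  · by_cases h02 : β 0 = β 2
    · right; right; refine ⟨β 0, ?_⟩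
      intro i; fin_cases i <;> simp_all
    · right; left; exact ⟨0, 1, 2, by decide, by decide, by decide, h01, h02⟩
  · by_cases h02 : β 0 = β 2
    · right; left; exact ⟨0, 2, 1, by decide, by decide, by decide, h02, h01⟩
    · by_cases h12 : β 1 = β 2
      · right; left; exact ⟨1, 2, 0, by decide, by decide, by decide, h12, fun h => h01 h.symm⟩
      · left
        intro i j h
        fin_cases i <;> fin_cases j <;> simp_all

lemma cg5 {β : Fin 3 → Fin 5} {E : Fin 3 → Fin 5 → Prop}
    (h : Cmb (⊤ : SimpleGraph (Fin 5)) β E) : CG (⊤ : SimpleGraph (Fin 5)) β E := by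
  have hadj : ∀ a b : Fin 5, (⊤ : SimpleGraph (Fin 5)).Adj a b ↔ a ≠ b := fun a b => by simp
  rcases patt β with hi | ⟨i, j, k, hij, hik, hjk, h1, h2⟩ | ⟨a, ha⟩
  · have : ∀ a b c : Fin 5, ∃ p q, p ≠ q ∧ a ≠ p ∧ b ≠ p ∧ c ≠ p ∧ a ≠ q ∧ b ≠ q ∧ c ≠ q := by
      decide
    obtain ⟨p, q, hpq, h1, h2, h3, h4, h5, h6⟩ := this (β 0) (β 1) (β 2)
    have hp : ∀ j, β j ≠ p := by intro j; fin_cases j <;> simp_all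
    have hq : ∀ j, β j ≠ q := by intro j; fin_cases j <;> simp_all
    have hE : ∀ w, (∀ j, β j ≠ w) → ∀ i, E i w := by
      intro w hw i
      obtain ⟨j, hj, hE⟩ := h.att w i hw ((hadj _ _).2 (hw i).symm)
      rwa [← hi hj]
    refine ⟨0, 1, 2, p, q, [], [], [], by decide, by decide, by decide, by simp [hpq], ?_,
      trivial, trivial, trivial, ?_⟩
    · simp only [List.append_nil, List.mem_cons, List.not_mem_nil, or_false]
      rintro w (rfl | rfl) <;> assumption
    · exact ⟨Or.inl (hE _ hp _), Or.inl (hE _ hp _), Or.inl (hE _ hp _), Or.inl (hE _ hq _),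
        Or.inl (hE _ hq _), Or.inl (hE _ hq _)⟩
  · have hthree : ∀ a b : Fin 5, ∃ p q r, p ≠ q ∧ p ≠ r ∧ q ≠ r ∧ a ≠ p ∧ b ≠ p ∧ a ≠ q ∧
        b ≠ q ∧ a ≠ r ∧ b ≠ r := by decide
    obtain ⟨p, q, r, hpq, hpr, hqr, g1, g2, g3, g4, g5, g6⟩ := hthree (β i) (β k)
    have hc : ∀ l, β l = β i ∨ β l = β k := by
      intro l
      rcases fin3_cases hij hik hjk l with rfl | rfl | rfl
      · left; rfl
      · left; exact h1.symm
      · right; rfl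
    obtain ⟨m, hm, hE⟩ := h.mat p q r hpq hpr hqr
      (fun l => by rcases hc l with h | h <;> rwa [h])
      (fun l => by rcases hc l with h | h <;> rwa [h])
      (fun l => by rcases hc l with h | h <;> rwa [h])
    have ho : ∀ l l', β l ≠ m l' := fun l l' => h.out _ _ (hE l') l
    have hk : ∀ l, E k (m l) := by
      intro l
      obtain ⟨l', e, hl'⟩ := h.att (m l) k (fun l' => ho l' l) ((hadj _ _).2 (ho _ _).symm)
      rcases fin3_cases hij hik hjk l' with rfl | rfl | rfl
      · exact absurd e h2
      · exact absurd (h1.trans e) h2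
      · exact hl'
    have main : ∀ i j, i ≠ j → i ≠ k → j ≠ k → E i (m k) →
        CG (⊤ : SimpleGraph (Fin 5)) β E := by
      intro i j hij hik hjk hE'
      refine ⟨i, j, k, m i, m k, [], [m j], [], hij, hik, hjk, ?_, ?_, trivial, hE j, trivial,
        Or.inl (hE i), Or.inr ⟨m j, by simp, (hadj _ _).2 (fun e => hij (hm e))⟩, Or.inl (hk _),
        Or.inl hE', Or.inr ⟨m j, by simp, (hadj _ _).2 (fun e => hjk (hm e).symm)⟩,
        Or.inl (hk _)⟩
      · simp [hm.eq_iff, hij, hik, hjk.symm]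
      · simp only [List.nil_append, List.append_nil, List.mem_cons, List.not_mem_nil, or_false]
        rintro w (rfl | rfl | rfl) l <;> exact ho _ _
    obtain ⟨l, e, hl⟩ := h.att (m k) i (fun l' => ho l' k) ((hadj _ _).2 (ho _ _).symm)
    rcases fin3_cases hij hik hjk l with rfl | rfl | rfl
    · exact main _ j hij hik hjk hl
    · exact main _ i hij.symm hjk hik hl
    · exact absurd e.symm h2
  · have hthree : ∀ a : Fin 5, ∃ p q r, p ≠ q ∧ p ≠ r ∧ q ≠ r ∧ a ≠ p ∧ a ≠ q ∧ a ≠ r := by decide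
    obtain ⟨p, q, r, hpq, hpr, hqr, g1, g2, g3⟩ := hthree a
    obtain ⟨m, hm, hE⟩ := h.mat p q r hpq hpr hqr
      (fun l => by rwa [ha]) (fun l => by rwa [ha]) (fun l => by rwa [ha])
    have hfour : ∀ a b c d : Fin 5, ∃ e, a ≠ e ∧ b ≠ e ∧ c ≠ e ∧ d ≠ e := by decide
    obtain ⟨e, e1, e2, e3, e4⟩ := hfour a (m 0) (m 1) (m 2)
    have hme : ∀ l, m l ≠ e := by intro l; fin_cases l <;> assumption
    obtain ⟨i, -, hi⟩ := h.att e 0 (fun l => by rwa [ha]) ((hadj _ _).2 (by rw [ha]; exact e1.symm))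
    have : ∀ i : Fin 3, ∃ j k, i ≠ j ∧ i ≠ k ∧ j ≠ k := by decide
    obtain ⟨j, k, hij, hik, hjk⟩ := this i
    refine ⟨i, j, k, m i, e, [], [m j], [m k], hij, hik, hjk, ?_, ?_, trivial, hE j, hE k,
        Or.inl (hE i), Or.inr ⟨m j, by simp, (hadj _ _).2 (fun e => hij (hm e))⟩,
        Or.inr ⟨m k, by simp, (hadj _ _).2 (fun e => hik (hm e))⟩,
        Or.inl hi, Or.inr ⟨m j, by simp, (hadj _ _).2 (hme _).symm⟩,
        Or.inr ⟨m k, by simp, (hadj _ _).2 (hme _).symm⟩⟩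
    · simp [hm.eq_iff, hij, hik, hjk, hme, fun l => (hme l).symm]
    · simp only [List.nil_append, List.cons_append, List.mem_cons, List.not_mem_nil, or_false]
      rintro w (rfl | rfl | rfl | rfl) l
      · exact h.out _ _ (hE _) l
      · rwa [ha]
      · exact h.out _ _ (hE _) l
      · exact h.out _ _ (hE _) l

/-- The side of a vertex of `K₃,₃`. -/
def sd : Fin 3 ⊕ Fin 3 → Bool
  | .inl _ => false
  | .inr _ => true

lemma k33_adj (a b : Fin 3 ⊕ Fin 3) :
    (completeBipartiteGraph (Fin 3) (Fin 3)).Adj a b ↔ sd a ≠ sd b := by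
  rcases a with a | a <;> rcases b with b | b <;> simp [sd]

lemma bool3 {a b c : Bool} (h1 : a ≠ c) (h2 : b ≠ c) : a = b := by
  revert a b c; decide

/-- Abstract properties of `K₃,₃`. -/
structure Bip {W : Type*} (J : SimpleGraph W) (sd : W → Bool) : Prop where
  adj : ∀ a b, J.Adj a b ↔ sd a ≠ sd b
  opp3 : ∀ a, ∃ b1 b2 b3, b1 ≠ b2 ∧ b1 ≠ b3 ∧ b2 ≠ b3 ∧ sd b1 ≠ sd a ∧
    sd b2 ≠ sd a ∧ sd b3 ≠ sd a
  third3 : ∀ a b, ∃ c, a ≠ c ∧ b ≠ c ∧ sd a = sd c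
  only3 : ∀ a b c d, a ≠ b → a ≠ c → b ≠ c → sd a = sd b →
    sd a = sd c → sd a = sd d → d = a ∨ d = b ∨ d = c
  out3 : ∀ a b : W, ∃ p q r, p ≠ q ∧ p ≠ r ∧ q ≠ r ∧ a ≠ p ∧ b ≠ p ∧ a ≠ q ∧
        b ≠ q ∧ a ≠ r ∧ b ≠ r

lemma bip33 : Bip (completeBipartiteGraph (Fin 3) (Fin 3)) sd where
  adj := k33_adj
  opp3 := by decide
  third3 := by decide
  only3 := by
    intro a b c d h1 h2 h3 h4 h5 h6
    rcases a with a | a <;> rcases b with b | b <;> rcases c with c | c <;>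
      rcases d with d | d <;> simp [sd] at * <;> omega
  out3 := by
    intro a b
    obtain ⟨p, q, r, h⟩ := (by decide : ∀ a b : Fin 6, ∃ p q r, p ≠ q ∧ p ≠ r ∧ q ≠ r ∧ a ≠ p ∧
      b ≠ p ∧ a ≠ q ∧ b ≠ q ∧ a ≠ r ∧ b ≠ r) (finSumFinEquiv a) (finSumFinEquiv b)
    refine ⟨finSumFinEquiv.symm p, finSumFinEquiv.symm q, finSumFinEquiv.symm r, ?_⟩
    simpa [Equiv.eq_symm_apply] using h

section K33
variable {W : Type*} {J : SimpleGraph W} {sd : W → Bool} {β : Fin 3 → W} {E : Fin 3 → W → Prop}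

lemma cg33_one (HB : Bip J sd) (h : Cmb J β E)
    {a : W} (ha : ∀ i, β i = a) : CG J β E := by
  have hb : ∀ b, sd b ≠ sd a → ∃ l, E l b := by
    intro b hb
    obtain ⟨j, _, hj⟩ := h.att b 0 (fun j e => hb (by rw [← e, ha]))
      ((HB.adj _ _).2 (by rwa [ha]))
    exact ⟨j, hj⟩
  have hEa : ∀ i w, E i w → w ≠ a := fun i w hw e => h.out i w hw 0 (by rw [ha, e])
  have L3 : ∀ i j k p q r, i ≠ j → i ≠ k → j ≠ k → p ≠ q → p ≠ r → q ≠ r → sd p ≠ sd a →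
      sd q ≠ sd a → sd r ≠ sd a → E i p → E j q → E k r →
      CG J β E := by
    intro i j k p q r hij hik hjk hpq hpr hqr sp sq sr hp hq hr
    obtain ⟨a1, h1, -, s1⟩ := HB.third3 a a
    obtain ⟨a2, h2, h3, s2⟩ := HB.third3 a a1
    refine ⟨i, j, k, a1, a2, [p], [q], [r], hij, hik, hjk, ?_, ?_, hp, hq, hr,
      Or.inr ⟨p, by simp, ?_⟩, Or.inr ⟨q, by simp, ?_⟩, Or.inr ⟨r, by simp, ?_⟩,
      Or.inr ⟨p, by simp, ?_⟩, Or.inr ⟨q, by simp, ?_⟩, Or.inr ⟨r, by simp, ?_⟩⟩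
    · simp; grind
    · simp [ha]; grind
    all_goals rw [HB.adj]; grind
  have L2 : ∀ i j k p q r, i ≠ j → i ≠ k → j ≠ k → p ≠ q → p ≠ r → q ≠ r → sd p = sd a →
      sd q ≠ sd a → sd r ≠ sd a → E i p → E j q → E k r →
      CG J β E := by
    intro i j k p q r hij hik hjk hpq hpr hqr sp sq sr hp hq hr
    obtain ⟨t, h1, h2, st⟩ := HB.third3 q r
    obtain ⟨u, h3, h4, su⟩ := HB.third3 a p
    have hpa := hEa _ _ hp
    have key : ∀ j k q r, i ≠ j → i ≠ k → j ≠ k → p ≠ q → p ≠ r → q ≠ r → t ≠ q → t ≠ r →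
      sd q ≠ sd a → sd r ≠ sd a → E j q → E k r → E j t →
      CG J β E := by
      intro j k q r hij hik hjk hpq hpr hqr htq htr sq sr hq hr ht
      refine ⟨i, j, k, q, t, [p], [], [r, u], hij, hik, hjk, ?_, ?_, hp, trivial, ⟨hr, ?_⟩,
        Or.inr ⟨p, by simp, ?_⟩, Or.inl hq, Or.inr ⟨u, by simp, ?_⟩,
        Or.inr ⟨p, by simp, ?_⟩, Or.inl ht, Or.inr ⟨u, by simp, ?_⟩⟩
      · simp; grind
      · simp [ha]; grind
      all_goals rw [HB.adj]; grind
    obtain ⟨l, hl⟩ := hb t (by grind)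
    rcases fin3_cases hij hik hjk l with rfl | rfl | rfl
    · exact L3 _ j k t q r hij hik hjk h1.symm h2.symm hqr (by grind) sq sr hl hq hr
    · exact key _ k q r hij hik hjk hpq hpr hqr h1.symm h2.symm sq sr hq hr hl
    · exact key _ j r q hik hij hjk.symm hpr hpq hqr.symm h2.symm h1.symm sr sq hr hq hl
  have L1 : ∀ i j k p q r, i ≠ j → i ≠ k → j ≠ k → p ≠ q → p ≠ r → q ≠ r → sd p = sd a →
      sd q = sd a → sd r ≠ sd a → E i p → E j q → E k r →
      CG J β E := by
    intro i j k p q r hij hik hjk hpq hpr hqr sp sq sr hp hq hr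
    obtain ⟨t, h1, -, st⟩ := HB.third3 r r
    obtain ⟨u, h3, h4, su⟩ := HB.third3 r t
    have hpa := hEa _ _ hp
    have hqa := hEa _ _ hq
    have key : ∀ t, r ≠ t → sd r = sd t → ∀ l, E l t → l ≠ k →
        CG J β E := by
      intro t h1 st l hl hlk
      rcases fin3_cases hij hik hjk l with rfl | rfl | rfl
      · exact L2 j _ k q t r hij.symm hjk hik (by grind) hqr h1.symm sq (by grind) sr hq hl hr
      · exact L2 i _ k p t r hij hik hjk (by grind) hpr h1.symm sp (by grind) sr hp hl hr
      · exact absurd rfl hlk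
    obtain ⟨l, hl⟩ := hb t (by grind)
    obtain ⟨l', hl'⟩ := hb u (by grind)
    by_cases e1 : l = k
    · by_cases e2 : l' = k
      · subst e1 e2
        refine ⟨i, j, _, t, u, [p], [q], [], hij, hik, hjk, ?_, ?_, hp, hq, trivial,
          Or.inr ⟨p, by simp, ?_⟩, Or.inr ⟨q, by simp, ?_⟩, Or.inl hl,
          Or.inr ⟨p, by simp, ?_⟩, Or.inr ⟨q, by simp, ?_⟩, Or.inl hl'⟩
        · simp; grind
        · simp [ha]; grind
        all_goals rw [HB.adj]; grind
      · exact key u h3 su l' hl' e2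
    · exact key t h1 st l hl e1
  obtain ⟨b1, b2, b3, b12, b13, b23, s1, s2, s3⟩ := HB.opp3 a
  obtain ⟨m, hm, hE⟩ := h.mat b1 b2 b3 b12 b13 b23 (by grind) (by grind) (by grind)
  have d : ∀ i j : Fin 3, i ≠ j → m i ≠ m j := fun i j hij e => hij (hm e)
  have hma := fun i => hEa _ _ (hE i)
  have d01 := d 0 1 (by decide)
  have d02 := d 0 2 (by decide)
  have d12 := d 1 2 (by decide)
  have n01 : (0 : Fin 3) ≠ 1 := by decide
  have n02 : (0 : Fin 3) ≠ 2 := by decide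
  have n12 : (1 : Fin 3) ≠ 2 := by decide
  by_cases t0 : sd (m 0) = sd a <;> by_cases t1 : sd (m 1) = sd a <;>
    by_cases t2 : sd (m 2) = sd a
  · rcases HB.only3 _ _ _ _ d01 d02 d12 (t0.trans t1.symm) (t0.trans t2.symm) t0 with e | e | e <;>
      exact absurd e.symm (hma _)
  · exact L1 0 1 2 _ _ _ n01 n02 n12 d01 d02 d12 t0 t1 t2 (hE _) (hE _) (hE _)
  · exact L1 0 2 1 _ _ _ n02 n01 n12.symm d02 d01 d12.symm t0 t2 t1 (hE _) (hE _) (hE _)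
  · exact L2 0 1 2 _ _ _ n01 n02 n12 d01 d02 d12 t0 t1 t2 (hE _) (hE _) (hE _)
  · exact L1 1 2 0 _ _ _ n12 n01.symm n02.symm d12 d01.symm d02.symm t1 t2 t0 (hE _) (hE _) (hE _)
  · exact L2 1 0 2 _ _ _ n01.symm n12 n02 d01.symm d12 d02 t1 t0 t2 (hE _) (hE _) (hE _)
  · exact L2 2 0 1 _ _ _ n02.symm n12.symm n01 d02.symm d12.symm d01 t2 t0 t1 (hE _) (hE _) (hE _)
  · exact L3 0 1 2 _ _ _ n01 n02 n12 d01 d02 d12 t0 t1 t2 (hE _) (hE _) (hE _)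

lemma cg33_three (HB : Bip J sd) (h : Cmb J β E)
    (hi : Function.Injective β) : CG J β E := by
  have hE : ∀ w i, (∀ j, β j ≠ w) → sd w ≠ sd (β i) → E i w := by
    intro w i hw hs
    obtain ⟨j, hj, hE⟩ := h.att w i hw ((HB.adj _ _).2 hs)
    rwa [← hi hj]
  have key : ∀ i j k, i ≠ j → i ≠ k → j ≠ k → sd (β i) = sd (β j) →
      CG J β E := by
    intro i j k hij hik hjk hs
    have c := fin3_cases hij hik hjk
    have nij : β i ≠ β j := fun e => hij (hi e)
    have nik : β i ≠ β k := fun e => hik (hi e)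
    have njk : β j ≠ β k := fun e => hjk (hi e)
    by_cases hsk : sd (β i) = sd (β k)
    · obtain ⟨b1, b2, b3, b12, b13, b23, s1, s2, s3⟩ := HB.opp3 (β i)
      have o1 : ∀ j, β j ≠ b1 := by
        intro l; rcases c l with e | e | e <;> clear hE <;> grind
      have o2 : ∀ j, β j ≠ b2 := by
        intro l; rcases c l with e | e | e <;> clear hE <;> grind
      refine ⟨i, j, k, b1, b2, [], [], [], hij, hik, hjk, by simp [b12], ?_,
        trivial, trivial, trivial, Or.inl (hE _ _ o1 ?_), Or.inl (hE _ _ o1 ?_),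
        Or.inl (hE _ _ o1 ?_), Or.inl (hE _ _ o2 ?_), Or.inl (hE _ _ o2 ?_),
        Or.inl (hE _ _ o2 ?_)⟩
      · simp; grind
      all_goals grind
    · obtain ⟨b2, n2, -, s2⟩ := HB.third3 (β k) (β k)
      obtain ⟨b3, n3, n23, s3⟩ := HB.third3 (β k) b2
      obtain ⟨a3, m1, m2, s4⟩ := HB.third3 (β i) (β j)
      have o1 : ∀ j, β j ≠ b2 := by
        intro l; rcases c l with e | e | e <;> clear hE <;> grind
      have o2 : ∀ j, β j ≠ b3 := by
        intro l; rcases c l with e | e | e <;> clear hE <;> grind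
      have o3 : ∀ j, β j ≠ a3 := by
        intro l; rcases c l with e | e | e <;> clear hE <;> grind
      refine ⟨i, j, k, b2, b3, [], [], [a3], hij, hik, hjk, ?_, ?_,
        trivial, trivial, hE _ _ o3 ?_, Or.inl (hE _ _ o1 ?_), Or.inl (hE _ _ o1 ?_),
        Or.inr ⟨a3, by simp, ?_⟩, Or.inl (hE _ _ o2 ?_), Or.inl (hE _ _ o2 ?_),
        Or.inr ⟨a3, by simp, ?_⟩⟩
      · simp; grind
      · simp; grind
      all_goals try rw [HB.adj]
      all_goals grind
  by_cases h01 : sd (β 0) = sd (β 1)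
  · exact key 0 1 2 (by decide) (by decide) (by decide) h01
  by_cases h02 : sd (β 0) = sd (β 2)
  · exact key 0 2 1 (by decide) (by decide) (by decide) h02
  · exact key 1 2 0 (by decide) (by decide) (by decide) (by
      revert h01 h02; cases sd (β 0) <;> cases sd (β 1) <;> cases sd (β 2) <;> simp)

lemma cg33_two (HB : Bip J sd) (h : Cmb J β E) {i j k : Fin 3}
    (hij : i ≠ j) (hik : i ≠ k) (hjk : j ≠ k) (h1 : β i = β j) (h2 : β i ≠ β k) :
    CG J β E := by
  have c := fin3_cases hij hik hjk
  have hc : ∀ w, β i ≠ w → β k ≠ w → ∀ l, β l ≠ w := by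
    intro w g1 g2 l
    rcases c l with rfl | rfl | rfl
    · exact g1
    · rwa [← h1]
    · exact g2
  have hk : ∀ w, β i ≠ w → β k ≠ w → sd w ≠ sd (β k) → E k w := by
    intro w g1 g2 g3
    obtain ⟨l, e, hl⟩ := h.att w k (hc w g1 g2) ((HB.adj _ _).2 g3)
    rcases c l with rfl | rfl | rfl
    · exact absurd e h2
    · exact absurd (h1.trans e) h2
    · exact hl
  have hp : ∀ w, β i ≠ w → β k ≠ w → sd w ≠ sd (β i) → E i w ∨ E j w := by
    intro w g1 g2 g3
    obtain ⟨l, e, hl⟩ := h.att w i (hc w g1 g2) ((HB.adj _ _).2 g3)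
    rcases c l with rfl | rfl | rfl
    · exact Or.inl hl
    · exact Or.inr hl
    · exact absurd e.symm h2
  have ho : ∀ l w, E l w → β i ≠ w ∧ β k ≠ w := fun l w hw => ⟨h.out l w hw i, h.out l w hw k⟩
  have hex : ∀ l, ∃ w, E l w := by
    obtain ⟨p, q, r, h⟩ := HB.out3 (β i) (β k)
    obtain ⟨m, -, hm⟩ := ‹Cmb _ β E›.mat p q r h.1 h.2.1 h.2.2.1 (hc _ h.2.2.2.1 h.2.2.2.2.1)
      (hc _ h.2.2.2.2.2.1 h.2.2.2.2.2.2.1) (hc _ h.2.2.2.2.2.2.2.1 h.2.2.2.2.2.2.2.2)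
    exact fun l => ⟨m l, hm l⟩
  by_cases hs : sd (β i) = sd (β k)
  · -- the two inner bags are on the same side
    obtain ⟨b1, b2, b3, b12, b13, b23, s1, s2, s3⟩ := HB.opp3 (β i)
    obtain ⟨a, n1, n2, sa⟩ := HB.third3 (β i) (β k)
    have split : ∀ i' j', i' ≠ j' → i' ≠ k → j' ≠ k → ∀ p q r, p ≠ q → p ≠ r → q ≠ r →
        sd p ≠ sd (β i) → sd q ≠ sd (β i) → sd r ≠ sd (β i) → E i' p → E i' q → E j' r →
        CG J β E := by
      intro i' j' d1 d2 d3 p q r hpq hpr hqr sp sq sr hEp hEq hEr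
      refine ⟨i', j', k, p, q, [], [r, a], [], d1, d2, d3, ?_, ?_, trivial, ⟨hEr, ?_⟩, trivial,
        Or.inl hEp, Or.inr ⟨a, by simp, ?_⟩, Or.inl (hk _ ?_ ?_ ?_),
        Or.inl hEq, Or.inr ⟨a, by simp, ?_⟩, Or.inl (hk _ ?_ ?_ ?_)⟩
      · simp; grind
      · intro w hw; apply hc <;> simp at hw <;> clear hp hk hex ho hc <;> grind
      all_goals try rw [HB.adj]
      all_goals clear hp hk hex ho hc
      all_goals grind
    have allsame : ∀ i' j', i' ≠ j' → i' ≠ k → j' ≠ k → E i' b1 → E i' b2 → E i' b3 →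
        CG J β E := by
      intro i' j' d1 d2 d3 e1 e2 e3
      obtain ⟨w, hw⟩ := hex j'
      obtain ⟨g1, g2⟩ := ho _ _ hw
      by_cases hsw : sd w = sd (β i)
      · have hwa : w = a := by
          rcases HB.only3 _ _ _ _ h2 n1 n2 hs sa hsw.symm with e | e | e <;> grind
        subst hwa
        refine ⟨i', j', k, b1, b2, [], [w], [], d1, d2, d3, ?_, ?_, trivial, hw, trivial,
          Or.inl e1, Or.inr ⟨w, by simp, ?_⟩, Or.inl (hk _ ?_ ?_ ?_),
          Or.inl e2, Or.inr ⟨w, by simp, ?_⟩, Or.inl (hk _ ?_ ?_ ?_)⟩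
        · simp; grind
        · intro w hw; apply hc <;> simp at hw <;> clear hp hk hex ho hc <;> grind
        all_goals try rw [HB.adj]
        all_goals clear hp hk hex ho hc
        all_goals grind
      · have hb12 : sd b1 = sd b2 := bool3 s1 s2
        have hb13 : sd b1 = sd b3 := bool3 s1 s3
        rcases HB.only3 _ _ _ w b12 b13 b23 hb12 hb13 (bool3 s1 hsw) with rfl | rfl | rfl
        · exact split i' j' d1 d2 d3 b2 b3 _ b23 b12.symm b13.symm s2 s3 s1 e2 e3 hw
        · exact split i' j' d1 d2 d3 b1 b3 _ b13 b12 b23.symm s1 s3 s2 e1 e3 hw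
        · exact split i' j' d1 d2 d3 b1 b2 _ b12 b13 b23 s1 s2 s3 e1 e2 hw
    have ne1 : ∀ b, sd b ≠ sd (β i) → β i ≠ b := fun b hb e => hb (e ▸ rfl)
    have ne2 : ∀ b, sd b ≠ sd (β i) → β k ≠ b := fun b hb e => hb (e ▸ hs.symm)
    have q1 := hp b1 (ne1 _ s1) (ne2 _ s1) s1
    have q2 := hp b2 (ne1 _ s2) (ne2 _ s2) s2
    have q3 := hp b3 (ne1 _ s3) (ne2 _ s3) s3
    rcases q1 with q1 | q1 <;> rcases q2 with q2 | q2 <;> rcases q3 with q3 | q3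
    · exact allsame i j hij hik hjk q1 q2 q3
    · exact split i j hij hik hjk b1 b2 b3 b12 b13 b23 s1 s2 s3 q1 q2 q3
    · exact split i j hij hik hjk b1 b3 b2 b13 b12 b23.symm s1 s3 s2 q1 q3 q2
    · exact split j i hij.symm hjk hik b2 b3 b1 b23 b12.symm b13.symm s2 s3 s1 q2 q3 q1
    · exact split i j hij hik hjk b2 b3 b1 b23 b12.symm b13.symm s2 s3 s1 q2 q3 q1
    · exact split j i hij.symm hjk hik b1 b3 b2 b13 b12 b23.symm s1 s3 s2 q1 q3 q2
    · exact split j i hij.symm hjk hik b1 b2 b3 b12 b13 b23 s1 s2 s3 q1 q2 q3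
    · exact allsame j i hij.symm hjk hik q1 q2 q3
  · -- the two inner bags are on opposite sides
    obtain ⟨b2, n2, -, s2⟩ := HB.third3 (β k) (β k)
    obtain ⟨b3, n3, n23, s3⟩ := HB.third3 (β k) b2
    obtain ⟨a2, m2, -, t2⟩ := HB.third3 (β i) (β i)
    obtain ⟨a3, m3, m23, t3⟩ := HB.third3 (β i) a2
    have split : E i b2 → E j b3 → CG J β E := by
      intro e1 e2
      refine ⟨i, j, k, a2, a3, [b2], [b3], [], hij, hik, hjk, ?_, ?_, e1, e2, trivial,
        Or.inr ⟨b2, by simp, ?_⟩, Or.inr ⟨b3, by simp, ?_⟩, Or.inl (hk _ ?_ ?_ ?_),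
        Or.inr ⟨b2, by simp, ?_⟩, Or.inr ⟨b3, by simp, ?_⟩, Or.inl (hk _ ?_ ?_ ?_)⟩
      · simp; grind
      · intro w hw; apply hc <;> simp at hw <;> clear hp hk hex ho hc <;> grind
      all_goals try rw [HB.adj]
      all_goals clear hp hk hex ho hc
      all_goals grind
    have split' : E j b2 → E i b3 → CG J β E := by
      intro e1 e2
      refine ⟨i, j, k, a2, a3, [b3], [b2], [], hij, hik, hjk, ?_, ?_, e2, e1, trivial,
        Or.inr ⟨b3, by simp, ?_⟩, Or.inr ⟨b2, by simp, ?_⟩, Or.inl (hk _ ?_ ?_ ?_),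
        Or.inr ⟨b3, by simp, ?_⟩, Or.inr ⟨b2, by simp, ?_⟩, Or.inl (hk _ ?_ ?_ ?_)⟩
      · simp; grind
      · intro w hw; apply hc <;> simp at hw <;> clear hp hk hex ho hc <;> grind
      all_goals try rw [HB.adj]
      all_goals clear hp hk hex ho hc
      all_goals grind
    have same : ∀ i' j', i' ≠ j' → i' ≠ k → j' ≠ k → E i' b2 → E i' b3 → ∀ a a', a ≠ a' →
        β i ≠ a → β i ≠ a' → sd (β i) = sd a → sd (β i) = sd a' → E j' a →
        CG J β E := by
      intro i' j' d1 d2 d3 e2 e3 a a' haa g1 g2 g3 g4 hEa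
      refine ⟨i', j', k, b2, b3, [], [a], [a'], d1, d2, d3, ?_, ?_, trivial, hEa, hk _ ?_ ?_ ?_,
        Or.inl e2, Or.inr ⟨a, by simp, ?_⟩, Or.inr ⟨a', by simp, ?_⟩,
        Or.inl e3, Or.inr ⟨a, by simp, ?_⟩, Or.inr ⟨a', by simp, ?_⟩⟩
      · simp; grind
      · intro w hw; apply hc <;> simp at hw <;> clear hp hk hex ho hc <;> grind
      all_goals try rw [HB.adj]
      all_goals clear hp hk hex ho hc
      all_goals grind
    have q2 := hp b2 (by clear hp hk hex same split split' ho hc; grind) n2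
      (by clear hp hk hex same split split' ho hc; grind)
    have q3 := hp b3 (by clear hp hk hex same split split' ho hc; grind) n3
      (by clear hp hk hex same split split' ho hc; grind)
    have hall : ∀ w, β i ≠ w → β k ≠ w → w = a2 ∨ w = a3 ∨ w = b2 ∨ w = b3 := by
      intro w g1 g2
      clear hp hk hex same split split' ho hc
      by_cases hsw : sd w = sd (β i)
      · rcases HB.only3 _ _ _ w m2 m3 m23 t2 t3 (by grind) with e | e | e <;> grind
      · have : sd (β k) = sd w := by
          revert hsw hs; cases sd (β i) <;> cases sd (β k) <;> cases sd w <;> simp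
        rcases HB.only3 _ _ _ _ n2 n3 n23 s2 s3 this with e | e | e <;> grind
    rcases q2 with q2 | q2 <;> rcases q3 with q3 | q3
    · obtain ⟨w, hw⟩ := hex j
      obtain ⟨g1, g2⟩ := ho _ _ hw
      rcases hall w g1 g2 with rfl | rfl | rfl | rfl
      · exact same i j hij hik hjk q2 q3 _ a3 m23 m2 m3 t2 t3 hw
      · exact same i j hij hik hjk q2 q3 _ a2 m23.symm m3 m2 t3 t2 hw
      · exact split' hw q3
      · exact split q2 hw
    · exact split q2 q3
    · exact split' q2 q3
    · obtain ⟨w, hw⟩ := hex i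
      obtain ⟨g1, g2⟩ := ho _ _ hw
      rcases hall w g1 g2 with rfl | rfl | rfl | rfl
      · exact same j i hij.symm hjk hik q2 q3 _ a3 m23 m2 m3 t2 t3 hw
      · exact same j i hij.symm hjk hik q2 q3 _ a2 m23.symm m3 m2 t3 t2 hw
      · exact split hw q3
      · exact split' q2 hw

lemma cg33 (HB : Bip J sd) (h : Cmb J β E) :
    CG J β E := by
  rcases patt β with hi | ⟨i, j, k, hij, hik, hjk, h1, h2⟩ | ⟨a, ha⟩
  · exact cg33_three HB h hi
  · exact cg33_two HB h hij hik hjk h1 h2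
  · exact cg33_one HB h ha
end K33

end R5


namespace R5
open SimpleGraph

lemma mkGood {V : Type*} {G : SimpleGraph V} {x : V} {A1 A2 C1 C2 C3 : Set V}
    (a1 : Cn G A1) (a2 : Cn G A2) (c1 : Cn G C1) (c2 : Cn G C2) (c3 : Cn G C3)
    (xa1 : x ∉ A1) (xa2 : x ∉ A2) (xc1 : x ∉ C1) (xc2 : x ∉ C2) (xc3 : x ∉ C3)
    (dA : ∀ v, v ∈ A1 → v ∉ A2) (d12 : ∀ v, v ∈ C1 → v ∉ C2) (d13 : ∀ v, v ∈ C1 → v ∉ C3)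
    (d23 : ∀ v, v ∈ C2 → v ∉ C3)
    (e11 : ∀ v, v ∈ A1 → v ∉ C1) (e12 : ∀ v, v ∈ A1 → v ∉ C2) (e13 : ∀ v, v ∈ A1 → v ∉ C3)
    (e21 : ∀ v, v ∈ A2 → v ∉ C1) (e22 : ∀ v, v ∈ A2 → v ∉ C2) (e23 : ∀ v, v ∈ A2 → v ∉ C3)
    (y1 : ∃ y ∈ C1, G.Adj x y) (y2 : ∃ y ∈ C2, G.Adj x y) (y3 : ∃ y ∈ C3, G.Adj x y)
    (f11 : ∃ a ∈ A1, ∃ c ∈ C1, G.Adj a c) (f12 : ∃ a ∈ A1, ∃ c ∈ C2, G.Adj a c)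
    (f13 : ∃ a ∈ A1, ∃ c ∈ C3, G.Adj a c)
    (f21 : ∃ a ∈ A2, ∃ c ∈ C1, G.Adj a c) (f22 : ∃ a ∈ A2, ∃ c ∈ C2, G.Adj a c)
    (f23 : ∃ a ∈ A2, ∃ c ∈ C3, G.Adj a c) : Good G x := by
  refine ⟨![A1, A2], ![C1, C2, C3], ?_, ?_, ?_, ?_, ?_, ?_, ?_, ?_, ?_⟩
  · intro j; fin_cases j <;> assumption
  · intro j; fin_cases j <;> assumption
  · intro j; fin_cases j <;> assumption
  · intro j; fin_cases j <;> assumption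
  · intro j j' v h h'
    fin_cases j <;> fin_cases j' <;>
      first
      | rfl
      | exact absurd h' (dA v h)
      | exact absurd h (dA v h')
  · intro j j' v h h'
    fin_cases j <;> fin_cases j' <;>
      first
      | rfl
      | exact absurd h' (d12 v h)
      | exact absurd h (d12 v h')
      | exact absurd h' (d13 v h)
      | exact absurd h (d13 v h')
      | exact absurd h' (d23 v h)
      | exact absurd h (d23 v h')
  · intro j i
    fin_cases j <;> fin_cases i <;> assumption
  · intro j; fin_cases j <;> assumption
  · intro j i
    fin_cases j <;> fin_cases i <;> assumption

theorem final {V W : Type*} [Finite V] [Fintype W] {J : SimpleGraph W} {G : SimpleGraph V} {x : V}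
    {μ : W → Set V} (hW : 4 ≤ Fintype.card W) (hcg : ∀ β E, Cmb J β E → CG J β E)
    (hN : (G.neighborSet x).ncard = 3) (h : Mdl J G μ) (hT : Tied G x μ) (hI : Irred G x μ)
    (hx : ∀ w, ∃ v ∈ μ w, v ≠ x) : Good G x := by
  classical
  obtain ⟨y, yinj, hy⟩ : ∃ y : Fin 3 → V, Function.Injective y ∧
      ∀ v, G.Adj x v ↔ ∃ i, y i = v := by
    obtain ⟨a, b, c, hab, hac, hbc, hS⟩ := Set.ncard_eq_three.1 hN
    refine ⟨![a, b, c], ?_, ?_⟩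
    · intro i j hij
      fin_cases i <;> fin_cases j <;> simp_all
    · intro v
      have : v ∈ G.neighborSet x ↔ v ∈ ({a, b, c} : Set V) := by rw [hS]
      simp only [mem_neighborSet, Set.mem_insert_iff, Set.mem_singleton_iff] at this
      rw [this, Fin.exists_fin_succ, Fin.exists_fin_succ, Fin.exists_fin_succ]
      simp [eq_comm]
  have hyx : ∀ i, G.Adj x (y i) := fun i => (hy _).2 ⟨i, rfl⟩
  have F1 : ∀ v w, v ∈ μ w → v ≠ x → ¬ G.Adj x v → μ w = {v} := by
    intro v w hv hvx hxv
    refine Set.Subset.antisymm (h.cn w {v} ⟨v, hv, rfl⟩ ?_) (by simpa using hv)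
    rintro a ha rfl b hb hab
    by_cases hbx : b = x
    · exact absurd (hbx ▸ hab).symm hxv
    · obtain ⟨w1, w2, hne, h1, h2⟩ := hI a b hab hvx hbx (fun e => hxv e.1)
      exact absurd ((h.dj _ _ _ h1 ha).trans (h.dj _ _ _ hb h2)) hne
  have hs : ∀ w, ∃ s, (∀ i, y i ∉ μ w) → μ w = {s} ∧ s ≠ x ∧ ¬ G.Adj x s := by
    intro w
    obtain ⟨v, hv, hvx⟩ := hx w
    refine ⟨v, fun ho => ?_⟩
    have : ¬ G.Adj x v := by
      rw [hy]; rintro ⟨i, rfl⟩; exact ho i hv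
    exact ⟨F1 v w hv hvx this, hvx, this⟩
  choose s hs using hs
  have F4 : ∀ S : Set V, S.ncard ≤ 2 → ∀ w0, (∀ i, y i ∉ μ w0) → s w0 ∉ S →
      ∃ i w, y i ∉ S ∧ (∀ i, y i ∉ μ w) ∧ s w ∉ S ∧ G.Adj (y i) (s w) := by
    intro S hS w0 hw0 hw0S
    by_contra hno
    have hno' : ∀ i w, (∀ i, y i ∉ μ w) → s w ∉ S → G.Adj (y i) (s w) → y i ∈ S := by
      intro i w h1 h2 h3
      by_contra h4
      exact hno ⟨i, w, h4, h1, h2, h3⟩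
    set D : Set V := {v | ∃ w, (∀ i, y i ∉ μ w) ∧ s w ∉ S ∧ s w = v} with hD
    have hDa : ∀ a b, G.Adj a b → a ∈ D → b ∈ D ∪ S := by
      rintro a b hab ⟨w, hw, hwS, rfl⟩
      have hsw := hs w hw
      by_cases hxb : G.Adj x b
      · obtain ⟨i, rfl⟩ := (hy b).1 hxb
        exact Or.inr (hno' i w hw hwS hab.symm)
      · have hbx : b ≠ x := fun e => hsw.2.2 (e ▸ hab).symm
        obtain ⟨w1, w2, hne, h1, h2⟩ := hI _ b hab hsw.2.1 hbx (fun e => hxb e.2)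
        have hw2 : μ w2 = {b} := F1 b w2 h2 hbx hxb
        have ho2 : ∀ i, y i ∉ μ w2 := by
          intro i hi
          rw [hw2] at hi
          exact hxb (by rw [← Set.mem_singleton_iff.1 hi]; exact hyx i)
        have : s w2 = b := by
          have := (hs w2 ho2).1
          rw [hw2] at this
          exact (Set.singleton_injective this).symm
        by_cases hbS : b ∈ S
        · exact Or.inr hbS
        · exact Or.inl ⟨w2, ho2, by rwa [this], this⟩
    obtain ⟨v, hv, hvA⟩ := hT Dᶜ (D ∪ S)
      (fun v => by by_cases hv : v ∈ D <;> simp [hv])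
      (fun a b hab => by
        by_cases ha : a ∈ D
        · exact Or.inr ⟨Or.inl ha, hDa a b hab ha⟩
        · by_cases hb : b ∈ D
          · exact Or.inr ⟨hDa b a hab.symm hb, Or.inl hb⟩
          · exact Or.inl ⟨ha, hb⟩)
      (by rintro ⟨w, hw, -, e⟩; exact (hs w hw).2.1 e)
      (by rintro _ hxy ⟨w, hw, -, rfl⟩; exact (hs w hw).2.2 hxy)
      (le_trans (Set.ncard_le_ncard (by
        rintro a ⟨h1, h2 | h2⟩
        · exact absurd h2 h1
        · exact h2) (Set.toFinite _)) hS) w0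
    rw [(hs w0 hw0).1] at hv
    exact hvA ⟨w0, hw0, hw0S, (Set.mem_singleton_iff.1 hv).symm⟩
  obtain ⟨w0, hw0⟩ : ∃ w, ∀ i, y i ∉ μ w := by
    by_contra hno
    push Not at hno
    choose g hg using hno
    have : Function.Injective g := by
      intro w w' e
      exact h.dj _ _ _ (hg w) (by rw [e]; exact hg w')
    have := Fintype.card_le_of_injective g this
    simp at this
    omega
  have hβ : ∀ i, ∃ w, y i ∈ μ w := by
    intro i
    obtain ⟨i', w, h1, h2, -, h4⟩ := F4 (y '' {i}ᶜ) (by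
      rw [Set.ncard_image_of_injective _ yinj, Set.ncard_compl]; simp) w0 hw0 (by
      rintro ⟨j, -, e⟩
      exact (hs w0 hw0).2.2 (e ▸ hyx j))
    have : i' = i := by
      by_contra hne
      exact h1 ⟨i', hne, rfl⟩
    subst this
    obtain ⟨w1, w2, -, h5, -⟩ := hI _ _ h4 (hyx i').ne' (hs w h2).2.1 (fun e => (hs w h2).2.2 e.2)
    exact ⟨w1, h5⟩
  choose β hβ using hβ
  have hO : ∀ w, (∀ j, β j ≠ w) → ∀ i, y i ∉ μ w := fun w hw i hi =>
    hw i (h.dj _ _ _ (hβ i) hi)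
  have hO' : ∀ w, (∀ i, y i ∉ μ w) → (∀ j, β j ≠ w) := fun w hw i e => hw i (e ▸ hβ i)
  have hsm : ∀ w, (∀ j, β j ≠ w) → s w ∈ μ w := fun w hw => by
    rw [(hs w (hO w hw)).1]; rfl
  have hcmb : Cmb J β (fun i w => (∀ j, β j ≠ w) ∧ G.Adj (y i) (s w)) := by
    refine ⟨fun i w hw => hw.1, ?_, ?_⟩
    · intro w i hw hJ
      obtain ⟨a, ha, b, hb, hab⟩ := h.adj _ _ hJ
      have hsw := hs w (hO w hw)
      rw [hsw.1, Set.mem_singleton_iff] at ha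
      subst ha
      have hxb : G.Adj x b := by
        by_contra hxb
        have hbx : b ≠ x := fun e => hsw.2.2 (e ▸ hab).symm
        have := F1 _ _ hb hbx hxb
        have hyi := hβ i
        rw [this, Set.mem_singleton_iff] at hyi
        exact hxb (hyi ▸ hyx i)
      obtain ⟨j, rfl⟩ := (hy b).1 hxb
      exact ⟨j, h.dj _ _ _ (hβ j) hb, hw, hab.symm⟩
    · intro a b c hab hac hbc ha hb hc
      have hall := (Finset.all_card_le_biUnion_card_iff_exists_injective
        (fun i : Fin 3 => Finset.univ.filter
          (fun w => (∀ j, β j ≠ w) ∧ G.Adj (y i) (s w)))).1 (by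
        intro P
        by_contra hlt
        push Not at hlt
        set N := P.biUnion (fun i : Fin 3 => Finset.univ.filter
          (fun w => (∀ j, β j ≠ w) ∧ G.Adj (y i) (s w))) with hNd
        have hP : P.card ≤ 3 := by simpa using Finset.card_le_univ P
        have hw : ∃ w, (∀ j, β j ≠ w) ∧ w ∉ N := by
          by_contra hno
          push Not at hno
          have : ({a, b, c} : Finset W) ⊆ N := by
            intro w hw
            simp only [Finset.mem_insert, Finset.mem_singleton] at hw
            rcases hw with rfl | rfl | rfl <;> exact hno _ (by assumption)
          have := Finset.card_le_card this
          rw [Finset.card_eq_three.2 ⟨a, b, c, hab, hac, hbc, rfl⟩] at this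
          omega
        obtain ⟨w, hwo, hwN⟩ := hw
        have hNo : ∀ w ∈ N, ∀ j, β j ≠ w := by
          intro w hw
          simp only [hNd, Finset.mem_biUnion, Finset.mem_filter] at hw
          obtain ⟨i, -, -, hw, -⟩ := hw
          exact hw
        obtain ⟨i, w', h1, h2, h3, h4⟩ := F4 ((Pᶜ.image y ∪ N.image s : Finset V) : Set V) (by
          rw [Set.ncard_coe_finset]
          refine (Finset.card_union_le _ _).trans ?_
          have e1 : (Pᶜ.image y).card ≤ Pᶜ.card := Finset.card_image_le
          have e2 : (N.image s).card ≤ N.card := Finset.card_image_le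
          rw [Finset.card_compl, Fintype.card_fin] at e1
          omega) w (hO w hwo) (by
          simp only [Finset.coe_union, Finset.coe_image, Set.mem_union, Set.mem_image,
            Finset.mem_coe]
          rintro (⟨i, -, e⟩ | ⟨w', hw', e⟩)
          · exact (hs w (hO w hwo)).2.2 (e ▸ hyx i)
          · have := h.dj _ _ _ (hsm w' (hNo w' hw')) (e ▸ hsm w hwo)
            exact hwN (this ▸ hw'))
        simp only [Finset.coe_union, Finset.coe_image, Set.mem_union, Set.mem_image,
            Finset.mem_coe, not_or] at h1 h3
        have hiP : i ∈ P := by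
          by_contra hiP
          exact h1.1 ⟨i, by simpa using hiP, rfl⟩
        exact h3.2 ⟨w', by
          simp only [hNd, Finset.mem_biUnion, Finset.mem_filter]
          exact ⟨i, hiP, Finset.mem_univ _, hO' w' h2, h4⟩, rfl⟩)
      obtain ⟨m, hm, hE⟩ := hall
      exact ⟨m, hm, fun i => (Finset.mem_filter.1 (hE i)).2⟩
  have hoo : ∀ w w', (∀ j, β j ≠ w) → (∀ j, β j ≠ w') → J.Adj w w' → G.Adj (s w) (s w') := by
    intro w w' hw hw' hJ
    obtain ⟨a, ha, b, hb, hab⟩ := h.adj _ _ hJ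
    rw [(hs w (hO w hw)).1, Set.mem_singleton_iff] at ha
    rw [(hs w' (hO w' hw')).1, Set.mem_singleton_iff] at hb
    rwa [ha, hb] at hab
  have sinj : ∀ w w', (∀ j, β j ≠ w) → (∀ j, β j ≠ w') → s w = s w' → w = w' := by
    intro w w' hw hw' e
    exact h.dj _ _ _ (hsm w hw) (e ▸ hsm w' hw')
  have sy : ∀ w i, (∀ j, β j ≠ w) → s w ≠ y i := fun w i hw e =>
    (hs w (hO w hw)).2.2 (e ▸ hyx i)
  have sx : ∀ w, (∀ j, β j ≠ w) → x ≠ s w := fun w hw => (hs w (hO w hw)).2.1.symm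
  obtain ⟨i, j, k, p, q, L1, L2, L3, hij, hik, hjk, hnd, hout, c1, c2, c3, t1, t2, t3, t4, t5,
    t6⟩ := hcg _ _ hcmb
  simp only [List.nodup_cons, List.nodup_append, List.mem_cons, List.mem_append, not_or] at hnd hout
  obtain ⟨⟨hpq, ⟨hp1, hp2⟩, hp3⟩, ⟨⟨hq1, hq2⟩, hq3⟩, ⟨-, -, h12⟩, -, h123⟩ := hnd
  have op := hout p (Or.inl rfl)
  have oq := hout q (Or.inr (Or.inl rfl))
  have o1 : ∀ t ∈ L1, ∀ j, β j ≠ t := fun t ht => hout t (Or.inr (Or.inr (Or.inl (Or.inl ht))))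
  have o2 : ∀ t ∈ L2, ∀ j, β j ≠ t := fun t ht => hout t (Or.inr (Or.inr (Or.inl (Or.inr ht))))
  have o3 : ∀ t ∈ L3, ∀ j, β j ≠ t := fun t ht => hout t (Or.inr (Or.inr (Or.inr ht)))
  have hCn : ∀ i L, (∀ t ∈ L, ∀ j, β j ≠ t) →
      Con J (fun i w => (∀ j, β j ≠ w) ∧ G.Adj (y i) (s w)) i L →
      Cn G {v | v = y i ∨ ∃ t ∈ L, s t = v} := by
    intro i L hL hc
    match L, hc with
    | [], _ =>
      have : {v | v = y i ∨ ∃ t ∈ ([] : List W), s t = v} = {y i} := by ext v; simp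
      rw [this]; exact Cn.singleton _ _
    | [t], hc =>
      have : {v | v = y i ∨ ∃ t' ∈ [t], s t' = v} = {y i} ∪ {s t} := by
        ext v; simp only [List.mem_singleton, Set.mem_setOf_eq, Set.mem_union, Set.mem_singleton_iff, exists_eq_left]
        rw [eq_comm (a := s t)]
      rw [this]
      exact Cn.union_adj (Cn.singleton _ _) (Cn.singleton _ _) rfl rfl hc.2
    | [t, u], hc =>
      have : {v | v = y i ∨ ∃ t' ∈ [t, u], s t' = v} = ({y i} ∪ {s t}) ∪ {s u} := by
        ext v; simp only [List.mem_cons, List.not_mem_nil, or_false, Set.mem_setOf_eq, Set.mem_union, Set.mem_singleton_iff, exists_eq_or_imp, exists_eq_left, or_assoc]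
        rw [eq_comm (a := s t), eq_comm (a := s u)]
      rw [this]
      exact Cn.union_adj (Cn.union_adj (Cn.singleton _ _) (Cn.singleton _ _) rfl rfl hc.1.2)
        (Cn.singleton _ _) (Or.inr rfl) rfl
        (hoo t u (hL t (by simp)) (hL u (by simp)) hc.2)
    | _ :: _ :: _ :: _, hc => exact hc.elim
  have hxC : ∀ i (L : List W), (∀ t ∈ L, ∀ j, β j ≠ t) → x ∉ {v | v = y i ∨ ∃ t ∈ L, s t = v} := by
    rintro i L hL (e | ⟨t, ht, e⟩)
    · exact (hyx i).ne e
    · exact sx t (hL t ht) e.symm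
  have hdC : ∀ i i' (L L' : List W), i ≠ i' → (∀ t ∈ L, ∀ j, β j ≠ t) → (∀ t ∈ L', ∀ j, β j ≠ t) →
      (∀ t ∈ L, ∀ t' ∈ L', t ≠ t') → ∀ v, v ∈ {v | v = y i ∨ ∃ t ∈ L, s t = v} →
      v ∉ {v | v = y i' ∨ ∃ t ∈ L', s t = v} := by
    rintro i i' L L' hii hL hL' hd v (e | ⟨t, ht, e⟩) (e' | ⟨t', ht', e'⟩)
    · exact hii (yinj (e.symm.trans e'))
    · exact sy t' i (hL' t' ht') (e'.trans e)
    · exact sy t i' (hL t ht) (e.trans e')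
    · exact hd t ht t' ht' (sinj _ _ (hL t ht) (hL' t' ht') (e.trans e'.symm))
  have hpC : ∀ p i (L : List W), (∀ j, β j ≠ p) → (∀ t ∈ L, ∀ j, β j ≠ t) → p ∉ L →
      ∀ v, v ∈ ({s p} : Set V) → v ∉ {v | v = y i ∨ ∃ t ∈ L, s t = v} := by
    rintro p i L hp hL hpL v rfl (e | ⟨t, ht, e⟩)
    · exact sy p i hp e
    · exact hpL (sinj _ _ (hL t ht) hp e ▸ ht)
  have hatt : ∀ p i (L : List W), (∀ j, β j ≠ p) → (∀ t ∈ L, ∀ j, β j ≠ t) →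
      Att J (fun i w => (∀ j, β j ≠ w) ∧ G.Adj (y i) (s w)) p i L →
      ∃ a ∈ ({s p} : Set V), ∃ c ∈ {v | v = y i ∨ ∃ t ∈ L, s t = v}, G.Adj a c := by
    rintro p i L hp hL (⟨-, e⟩ | ⟨t, ht, e⟩)
    · exact ⟨s p, rfl, y i, Or.inl rfl, e.symm⟩
    · exact ⟨s p, rfl, s t, Or.inr ⟨t, ht, rfl⟩, hoo _ _ hp (hL t ht) e⟩
  exact mkGood (A1 := {s p}) (A2 := {s q}) (Cn.singleton _ _) (Cn.singleton _ _)
    (hCn i L1 o1 c1) (hCn j L2 o2 c2) (hCn k L3 o3 c3) (sx p op) (sx q oq)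
    (hxC i L1 o1) (hxC j L2 o2) (hxC k L3 o3)
    (by rintro v rfl e; exact hpq (sinj _ _ op oq e))
    (hdC i j L1 L2 hij o1 o2 h12)
    (hdC i k L1 L3 hik o1 o3 (fun t ht t' ht' => h123 t (Or.inl ht) t' ht'))
    (hdC j k L2 L3 hjk o2 o3 (fun t ht t' ht' => h123 t (Or.inr ht) t' ht'))
    (hpC _ _ _ op o1 hp1) (hpC _ _ _ op o2 hp2) (hpC _ _ _ op o3 hp3)
    (hpC _ _ _ oq o1 hq1) (hpC _ _ _ oq o2 hq2) (hpC _ _ _ oq o3 hq3)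
    ⟨y i, Or.inl rfl, hyx i⟩ ⟨y j, Or.inl rfl, hyx j⟩ ⟨y k, Or.inl rfl, hyx k⟩
    (hatt _ _ _ op o1 t1) (hatt _ _ _ op o2 t2) (hatt _ _ _ op o3 t3)
    (hatt _ _ _ oq o1 t4) (hatt _ _ _ oq o2 t5) (hatt _ _ _ oq o3 t6)

end R5


namespace R5
open SimpleGraph

lemma cn_of_connected {V : Type*} {G : SimpleGraph V} {S : Set V}
    (h : (G.induce S).Connected) : Cn G S := by
  rintro T ⟨t, htS, htT⟩ hcl v hv
  obtain ⟨w⟩ := h.preconnected ⟨t, htS⟩ ⟨v, hv⟩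
  have key : ∀ (a b : S), (G.induce S).Walk a b → a.1 ∈ T → b.1 ∈ T := by
    intro a b w
    induction w with
    | nil => exact id
    | cons hab _ ih => exact fun ha => ih (hcl _ (Subtype.coe_prop _) ha _ (Subtype.coe_prop _) hab)
  exact key _ _ w htT

lemma tied_of_sep {V W : Type*} [Finite V] {G : SimpleGraph V} {x : V} {μ : W → Set V}
    (hne : ∀ w, ∃ v, v ∈ μ w) (hN : (G.neighborSet x).ncard = 3)
    (hsep : ∀ A B : Set V, A ∪ B = Set.univ → A ≠ Set.univ → B ≠ Set.univ → (A ∩ B).ncard ≤ 2 →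
      NoCross G A B → ¬ (insert x (G.neighborSet x) ⊆ A)) : Tied G x μ := by
  intro A B hcov hnc hxA hNA hcard w
  by_contra hno
  push Not at hno
  have hsub : insert x (G.neighborSet x) ⊆ A := by
    intro v hv
    rcases hv with rfl | hv
    · exact hxA
    · exact hNA v hv
  refine hsep A B (Set.eq_univ_of_forall hcov) ?_ ?_ hcard hnc hsub
  · rintro rfl
    obtain ⟨v, hv⟩ := hne w
    exact hno v hv trivial
  · rintro rfl
    rw [Set.inter_univ] at hcard
    have := Set.ncard_le_ncard (Set.subset_insert x _ |>.trans hsub) (Set.toFinite A)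
    omega

lemma single_bag {V W : Type*} {J : SimpleGraph W} {G : SimpleGraph V} {x : V}
    {μ : W → Set V} (h : Mdl J G μ) {w : W} (hw : ∀ v ∈ μ w, v = x) {w' : W}
    (hadj : J.Adj w w') : ∃ y ∈ μ w', G.Adj x y := by
  obtain ⟨a, ha, b, hb, hab⟩ := h.adj w w' hadj
  exact ⟨b, hb, hw a ha ▸ hab⟩

lemma x_mem_single {V W : Type*} {J : SimpleGraph W} {G : SimpleGraph V} {x : V}
    {μ : W → Set V} (h : Mdl J G μ) {w : W} (hw : ∀ v ∈ μ w, v = x) : x ∈ μ w := by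
  obtain ⟨v, hv⟩ := h.ne w
  exact hw v hv ▸ hv

theorem good5 {V : Type*} [Finite V] {G : SimpleGraph V} {x : V} {μ : Fin 5 → Set V}
    (hN : (G.neighborSet x).ncard = 3) (h : Mdl (⊤ : SimpleGraph (Fin 5)) G μ)
    (hT : Tied G x μ) : Good G x := by
  refine reduce ?_ x ?_ _ G μ rfl hN h hT
  · intro w w' hne hna
    exact absurd ((top_adj _ _).2 hne) hna
  · intro G μ hN h hT hI
    by_cases hx : ∀ w, ∃ v ∈ μ w, v ≠ x
    · exact final (by simp) (fun _ _ => cg5) hN h hT hI hx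
    · exfalso
      push Not at hx
      obtain ⟨w, hw⟩ := hx
      have : ∀ w' : {w' // w' ≠ w}, ∃ y, y ∈ μ w' ∧ G.Adj x y := by
        intro w'
        obtain ⟨y, h1, h2⟩ := single_bag h hw ((top_adj _ _).2 w'.2.symm)
        exact ⟨y, h1, h2⟩
      choose f hf hf' using this
      have hinj : Function.Injective (fun w' => (⟨f w', hf' w'⟩ : G.neighborSet x)) := by
        intro a b hab
        have e : f a = f b := congrArg Subtype.val hab
        exact Subtype.ext (h.dj _ _ _ (hf a) (e ▸ hf b))
      have := Nat.card_le_card_of_injective _ hinj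
      rw [Nat.card_coe_set_eq, hN, Nat.card_eq_fintype_card] at this
      simp at this

theorem good33 {V : Type*} [Finite V] {G : SimpleGraph V} {x : V} {μ : Fin 3 ⊕ Fin 3 → Set V}
    (hN : (G.neighborSet x).ncard = 3) (h : Mdl (completeBipartiteGraph (Fin 3) (Fin 3)) G μ)
    (hT : Tied G x μ) : Good G x := by
  refine reduce ?_ x ?_ _ G μ rfl hN h hT
  · intro w w' hne hna
    rcases w with w | w <;> rcases w' with w' | w' <;> simp at hna
    · exact ⟨Sum.inr, Sum.inr_injective, by simp⟩
    · exact ⟨Sum.inl, Sum.inl_injective, by simp⟩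
  · intro G μ hN h hT hI
    by_cases hx : ∀ w, ∃ v ∈ μ w, v ≠ x
    · exact final (by simp) (fun _ _ => cg33 bip33) hN h hT hI hx
    · push Not at hx
      obtain ⟨w, hw⟩ := hx
      have hxw := x_mem_single h hw
      have key : ∀ (A : Fin 2 → Fin 3 ⊕ Fin 3) (C : Fin 3 → Fin 3 ⊕ Fin 3),
          Function.Injective A → Function.Injective C → (∀ j, A j ≠ w) → (∀ i, C i ≠ w) →
          (∀ j i, A j ≠ C i) →
          (∀ i, (completeBipartiteGraph (Fin 3) (Fin 3)).Adj w (C i)) →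
          (∀ j i, (completeBipartiteGraph (Fin 3) (Fin 3)).Adj (A j) (C i)) → Good G x := by
        intro A C hA hC hAw hCw hAC h1 h2
        refine ⟨fun j => μ (A j), fun i => μ (C i), fun j => h.cn _, fun i => h.cn _,
          fun j hj => hAw j (h.dj _ _ _ hj hxw), fun j hj => hCw j (h.dj _ _ _ hj hxw),
          fun j j' v hv hv' => hA (h.dj _ _ _ hv hv'), fun j j' v hv hv' => hC (h.dj _ _ _ hv hv'),
          fun j i v hv hv' => hAC j i (h.dj _ _ _ hv hv'), fun i => single_bag h hw (h1 i),
          fun j i => h.adj _ _ (h2 j i)⟩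
      rcases w with w | w
      · exact key (fun j => Sum.inl (w.succAbove j)) Sum.inr
          (fun a b e => Fin.succAbove_right_injective (Sum.inl_injective e)) Sum.inr_injective
          (fun j e => Fin.succAbove_ne w j (Sum.inl_injective e)) (by simp) (by simp) (by simp)
          (by simp)
      · exact key (fun j => Sum.inr (w.succAbove j)) Sum.inl
          (fun a b e => Fin.succAbove_right_injective (Sum.inr_injective e)) Sum.inl_injective
          (fun j e => Fin.succAbove_ne w j (Sum.inr_injective e)) (by simp) (by simp) (by simp)
          (by simp)

end R5


namespace R5
open SimpleGraph

lemma Cn.path {V : Type*} {G : SimpleGraph V} {S : Set V} (h : Cn G S) {p q : V}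
    (hp : p ∈ S) (hq : q ∈ S) : ∃ w : G.Walk p q, w.IsPath ∧ ∀ v ∈ w.support, v ∈ S := by
  classical
  have : S ⊆ {v | ∃ w : G.Walk p v, ∀ u ∈ w.support, u ∈ S} := by
    apply h
    · exact ⟨p, hp, Walk.nil, by simpa using hp⟩
    · rintro a ha ⟨w, hw⟩ b hb hab
      refine ⟨w.concat hab, ?_⟩
      intro u hu
      rw [Walk.support_concat, List.mem_append, List.mem_singleton] at hu
      rcases hu with hu | rfl
      · exact hw u hu
      · exact hb
  obtain ⟨w, hw⟩ := this hq
  exact ⟨w.bypass, w.bypass_isPath, fun v hv => hw v (w.support_bypass_subset hv)⟩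

lemma first_hit {V : Type*} {G : SimpleGraph V} (X : Set V) {p q : V} (w : G.Walk p q)
    (hq : q ∈ X) : w.IsPath → ∃ m ∈ X, ∃ w' : G.Walk p m, w'.IsPath ∧
      (∀ v ∈ w'.support, v ∈ w.support) ∧ ∀ v ∈ w'.support, v ∈ X → v = m := by
  induction w with
  | nil => exact fun _ => ⟨_, hq, Walk.nil, by simp, by simp, by simp⟩
  | @cons a b c hab w ih =>
    intro hp
    rw [Walk.cons_isPath_iff] at hp
    by_cases ha : a ∈ X
    · exact ⟨a, ha, Walk.nil, by simp, by simp, by simp⟩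
    · obtain ⟨m, hm, w', h1, h2, h3⟩ := ih hq hp.1
      refine ⟨m, hm, Walk.cons hab w', ?_, ?_, ?_⟩
      · rw [Walk.cons_isPath_iff]
        exact ⟨h1, fun h => hp.2 (h2 _ h)⟩
      · intro v hv
        rw [Walk.support_cons, List.mem_cons] at hv ⊢
        exact hv.imp id (h2 v)
      · intro v hv hvX
        rw [Walk.support_cons, List.mem_cons] at hv
        rcases hv with rfl | hv
        · exact absurd hvX ha
        · exact h3 v hv hvX

lemma tripod {V : Type*} {G : SimpleGraph V} {S : Set V} (h : Cn G S) (t : Fin 3 → V)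
    (ht : ∀ k, t k ∈ S) : ∃ (m : V) (P : ∀ k, G.Walk m (t k)), (∀ k, (P k).IsPath) ∧
      (∀ k, ∀ v ∈ (P k).support, v ∈ S) ∧
      ∀ k k' v, k ≠ k' → v ∈ (P k).support → v ∈ (P k').support → v = m := by
  classical
  obtain ⟨w, hw, hwS⟩ := h.path (ht 1) (ht 2)
  obtain ⟨u, hu, huS⟩ := h.path (ht 0) (ht 1)
  obtain ⟨m, hm, u', h1, h2, h3⟩ := first_hit {v | v ∈ w.support} u w.start_mem_support hu
  have hm' : m ∈ w.support := hm
  have hmid : ∀ v, v ∈ (w.takeUntil m hm').support → v ∈ (w.dropUntil m hm').support → v = m := by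
    intro v hv hv'
    have hp : ((w.takeUntil m hm').append (w.dropUntil m hm')).IsPath := by
      rw [Walk.take_spec]; exact hw
    by_contra hne
    have := hp.support_nodup
    rw [Walk.support_append] at this
    have hd := List.disjoint_of_nodup_append this
    rw [Walk.mem_support_iff] at hv'
    rcases hv' with rfl | hv'
    · exact hne rfl
    · exact hd hv hv'
  have P : ∀ k, ∃ Q : G.Walk m (t k), Q.IsPath ∧ (∀ v, v ∈ Q.support ↔
      v ∈ (![u'.support, (w.takeUntil m hm').support, (w.dropUntil m hm').support] k)) := by
    intro k
    fin_cases k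
    · exact ⟨u'.reverse, h1.reverse, by simp⟩
    · exact ⟨(w.takeUntil m hm').reverse, (hw.takeUntil hm').reverse, by simp⟩
    · exact ⟨w.dropUntil m hm', hw.dropUntil hm', by simp⟩
  choose Q hQ hQs using P
  have hts := w.support_takeUntil_subset hm'
  have hds := w.support_dropUntil_subset hm'
  refine ⟨m, Q, hQ, ?_, ?_⟩
  · intro k v hv
    rw [hQs] at hv
    fin_cases k
    · exact huS v (h2 v hv)
    · exact hwS v (hts hv)
    · exact hwS v (hds hv)
  · intro k k' v hkk hv hv'
    rw [hQs] at hv hv'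
    fin_cases k <;> fin_cases k' <;> first | exact absurd rfl hkk | skip
    · exact h3 v hv (hts hv')
    · exact h3 v hv (hds hv')
    · exact h3 v hv' (hts hv)
    · exact hmid v hv hv'
    · exact h3 v hv' (hds hv)
    · exact hmid v hv' hv

/-- Assemble a subdivision of `K₃,₃` from nine paths. -/
lemma asm {U : Type*} (H : SimpleGraph U) (f : Fin 3 ⊕ Fin 3 ↪ U)
    (q : ∀ k i : Fin 3, H.Walk (f (Sum.inl k)) (f (Sum.inr i)))
    (hq : ∀ k i, (q k i).IsPath)
    (hb : ∀ k i w, f w ∈ (q k i).support → w = Sum.inl k ∨ w = Sum.inr i)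
    (hd : ∀ k i k' i' v, ¬ (k = k' ∧ i = i') → v ∈ (q k i).support → v ∈ (q k' i').support →
      v ∈ Set.range f)
    (hv : ∀ v, ∃ k i, v ∈ (q k i).support)
    (he : ∀ e ∈ H.edgeSet, ∃ k i, e ∈ (q k i).edges) : IsSubdivision H K33 := by
  have hadj : ∀ k i, K33.Adj (Sum.inl k) (Sum.inr i) := by
    intro k i; simp [K33]
  refine ⟨f, fun u v h => match u, v, h with
    | Sum.inl k, Sum.inr i, _ => q k i
    | Sum.inr i, Sum.inl k, _ => (q k i).reverse
    | Sum.inl _, Sum.inl _, h => absurd h (by simp [K33])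
    | Sum.inr _, Sum.inr _, h => absurd h (by simp [K33]), ?_, ?_, ?_, ?_, ?_, ?_, ?_⟩
  · rintro (k | i) (k' | i') h
    · exact absurd h (by simp [K33])
    · exact hq _ _
    · exact (hq _ _).reverse
    · exact absurd h (by simp [K33])
  · rintro (k | i) (k' | i') h
    · exact absurd h (by simp [K33])
    · rfl
    · simp
    · exact absurd h (by simp [K33])
  · intro u v h hS
    exact absurd (Set.mem_univ _) hS
  · rintro (k | i) (k' | i') h w hw
    · exact absurd h (by simp [K33])
    · exact hb _ _ _ hw
    · rw [Walk.support_reverse, List.mem_reverse] at hw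
      exact (hb _ _ _ hw).symm
    · exact absurd h (by simp [K33])
  · rintro (k | i) (k' | i') (l | j) (l' | j') h h' hne v hv hv'
    all_goals first
      | (simp [K33] at h; done)
      | (simp [K33] at h'; done)
      | skip
    · exact hd _ _ _ _ v (by rintro ⟨rfl, rfl⟩; exact hne rfl) hv hv'
    · rw [Walk.support_reverse, List.mem_reverse] at hv'
      exact hd _ _ _ _ v (by rintro ⟨rfl, rfl⟩; exact hne Sym2.eq_swap) hv hv'
    · rw [Walk.support_reverse, List.mem_reverse] at hv
      exact hd _ _ _ _ v (by rintro ⟨rfl, rfl⟩; exact hne Sym2.eq_swap) hv hv'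
    · rw [Walk.support_reverse, List.mem_reverse] at hv hv'
      exact hd _ _ _ _ v (by rintro ⟨rfl, rfl⟩; exact hne rfl) hv hv'
  · intro v
    obtain ⟨k, i, h⟩ := hv v
    exact Or.inr ⟨_, _, hadj k i, h⟩
  · intro e h
    obtain ⟨k, i, h⟩ := he e h
    exact ⟨_, _, hadj k i, h⟩

lemma lift_walk {V : Type*} {G : SimpleGraph V} (H : G.Subgraph) {u v : V} (w : G.Walk u v)
    (hu : u ∈ H.verts) (hv : v ∈ H.verts) (he : ∀ e ∈ w.edges, e ∈ H.edgeSet) :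
    ∃ w' : H.coe.Walk ⟨u, hu⟩ ⟨v, hv⟩, w'.support.map Subtype.val = w.support ∧
      w'.edges.map (Sym2.map Subtype.val) = w.edges := by
  induction w with
  | nil => exact ⟨Walk.nil, by simp, by simp⟩
  | @cons a b c hab w ih =>
    have hH : H.Adj a b := by
      have := he s(a, b) (by simp)
      simpa using this
    obtain ⟨w', h1, h2⟩ := ih hH.snd_mem hv (fun e h => he e (by simp [h]))
    refine ⟨Walk.cons (v := ⟨b, hH.snd_mem⟩) (by simpa using hH) w', ?_, ?_⟩
    · simp [h1]
    · simp [h2]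

theorem asmG {V : Type*} (G : SimpleGraph V) (f : Fin 3 ⊕ Fin 3 → V) (hf : Function.Injective f)
    (q : ∀ k i : Fin 3, G.Walk (f (Sum.inl k)) (f (Sum.inr i)))
    (hq : ∀ k i, (q k i).IsPath)
    (hb : ∀ k i w, f w ∈ (q k i).support → w = Sum.inl k ∨ w = Sum.inr i)
    (hd : ∀ k i k' i' v, ¬ (k = k' ∧ i = i') → v ∈ (q k i).support → v ∈ (q k' i').support →
      v ∈ Set.range f)
    (hx : ∀ v, G.Adj (f (Sum.inl 0)) v → ∃ i, s(f (Sum.inl 0), v) ∈ (q 0 i).edges) :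
    ∃ G' : G.Subgraph, IsSubdivision G'.coe K33 ∧ f (Sum.inl 0) ∈ G'.verts ∧
      G'.neighborSet (f (Sum.inl 0)) = G.neighborSet (f (Sum.inl 0)) := by
  let G' : G.Subgraph := ⨆ k, ⨆ i, (q k i).toSubgraph
  have hverts : ∀ v, v ∈ G'.verts ↔ ∃ k i, v ∈ (q k i).support := by
    intro v; simp only [G', Subgraph.verts_iSup, Set.mem_iUnion, Walk.mem_verts_toSubgraph]
  have hedges : ∀ e, e ∈ G'.edgeSet ↔ ∃ k i, e ∈ (q k i).edges := by
    intro e; simp only [G', Subgraph.edgeSet_iSup, Set.mem_iUnion, Walk.mem_edges_toSubgraph]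
  have hfv : ∀ w, f w ∈ G'.verts := by
    rintro (k | i)
    · exact (hverts _).2 ⟨k, 0, Walk.start_mem_support _⟩
    · exact (hverts _).2 ⟨0, i, Walk.end_mem_support _⟩
  have := fun k i => lift_walk G' (q k i) (hfv _) (hfv _) (fun e he => (hedges e).2 ⟨k, i, he⟩)
  choose q' hs' he' using this
  have hmem : ∀ k i (v : G'.verts), v ∈ (q' k i).support ↔ v.1 ∈ (q k i).support := by
    intro k i v
    rw [← hs' k i, List.mem_map_of_injective Subtype.val_injective]
  refine ⟨G', asm G'.coe ⟨fun w => ⟨f w, hfv w⟩, fun a b e => hf (congrArg Subtype.val e)⟩ q'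
    ?_ ?_ ?_ ?_ ?_, hfv _, ?_⟩
  · intro k i
    rw [Walk.isPath_def]
    have := (hq k i).support_nodup
    rw [← hs' k i] at this
    exact List.Nodup.of_map _ this
  · intro k i w hw
    exact hb k i w ((hmem _ _ _).1 hw)
  · intro k i k' i' v hne hv hv'
    obtain ⟨w, hw⟩ := hd k i k' i' v.1 hne ((hmem _ _ _).1 hv) ((hmem _ _ _).1 hv')
    exact ⟨w, Subtype.ext hw⟩
  · intro v
    obtain ⟨k, i, h⟩ := (hverts _).1 v.2
    exact ⟨k, i, (hmem _ _ _).2 h⟩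
  · intro e he
    induction e using Sym2.ind with
    | _ a b =>
    have h1 : s(a.1, b.1) ∈ G'.edgeSet := by simpa using he
    obtain ⟨k, i, h⟩ := (hedges _).1 h1
    refine ⟨k, i, ?_⟩
    rw [← he' k i, List.mem_map] at h
    obtain ⟨e', h2, h3⟩ := h
    have : e' = s(a, b) := Sym2.map.injective Subtype.val_injective (by simpa using h3)
    exact this ▸ h2
  · ext v
    constructor
    · intro h; exact G'.adj_sub h
    · intro h
      obtain ⟨i, hi⟩ := hx v h
      have := (hedges _).2 ⟨0, i, hi⟩
      simpa using this

theorem good_sub {V : Type*} [Finite V] {G : SimpleGraph V} {x : V}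
    (hN : (G.neighborSet x).ncard = 3) (h : Good G x) :
    ∃ G' : G.Subgraph, IsSubdivision G'.coe K33 ∧ x ∈ G'.verts ∧
      (G'.neighborSet x).ncard = 3 := by
  obtain ⟨A₀, C, cA₀, cC, xA, xC, dA₀, dC, dAC₀, hy, hac⟩ := h
  obtain ⟨A, hA0, hA⟩ : ∃ A : Fin 3 → Set V, A 0 = {x} ∧ ∀ j : Fin 2, A j.succ = A₀ j :=
    ⟨Fin.cons {x} A₀, by simp, by simp⟩
  have cA : ∀ k, Cn G (A k) := by
    intro k
    refine Fin.cases ?_ (fun j => ?_) k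
    · rw [hA0]; exact Cn.singleton _ _
    · rw [hA]; exact cA₀ j
  have dA : ∀ k k' v, v ∈ A k → v ∈ A k' → k = k' := by
    intro k k' v
    refine Fin.cases ?_ (fun j => ?_) k <;> refine Fin.cases ?_ (fun j' => ?_) k'
    · exact fun _ _ => rfl
    · rw [hA0, hA]; rintro rfl hv; exact absurd hv (xA j')
    · rw [hA0, hA]; rintro hv rfl; exact absurd hv (xA j)
    · rw [hA, hA]; intro h1 h2; rw [dA₀ j j' v h1 h2]
  have dAC : ∀ k i v, v ∈ A k → v ∉ C i := by
    intro k i v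
    refine Fin.cases ?_ (fun j => ?_) k
    · rw [hA0]; rintro rfl; exact xC i
    · rw [hA]; exact dAC₀ j i v
  have hadj : ∀ k i, ∃ a c, a ∈ A k ∧ c ∈ C i ∧ G.Adj a c := by
    intro k i
    refine Fin.cases ?_ (fun j => ?_) k
    · rw [hA0]; obtain ⟨y, h1, h2⟩ := hy i; exact ⟨x, y, rfl, h1, h2⟩
    · rw [hA]; obtain ⟨a, h1, c, h2, h3⟩ := hac j i; exact ⟨a, c, h1, h2, h3⟩
  choose a c haA hcC hac' using hadj
  choose α P hP hPs hPd using fun k => tripod (cA k) (a k) (haA k)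
  choose γ Q hQ hQs hQd using fun i => tripod (cC i) (fun k => c k i) (fun k => hcC k i)
  have hαA : ∀ k, α k ∈ A k := fun k => hPs k 0 _ (Walk.start_mem_support _)
  have hγC : ∀ i, γ i ∈ C i := fun k => hQs k 0 _ (Walk.start_mem_support _)
  have hα0 : α 0 = x := by have := hαA 0; rw [hA0] at this; exact this
  have ha0 : ∀ i, a 0 i = x := by intro i; have := haA 0 i; rw [hA0] at this; exact this
  let q : ∀ k i, G.Walk (α k) (γ i) :=
    fun k i => (P k i).append (Walk.cons (hac' k i) (Q i k).reverse)
  have hqs : ∀ k i v, v ∈ (q k i).support ↔ v ∈ (P k i).support ∨ v ∈ (Q i k).support := by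
    intro k i v
    simp only [q, Walk.mem_support_append_iff, Walk.support_cons, List.mem_cons,
      Walk.support_reverse, List.mem_reverse]
    constructor
    · rintro (h | rfl | h)
      · exact Or.inl h
      · exact Or.inl (Walk.end_mem_support _)
      · exact Or.inr h
    · rintro (h | h)
      · exact Or.inl h
      · exact Or.inr (Or.inr h)
  have hsurj : ∀ v, G.Adj x v → ∃ i, c 0 i = v := by
    refine surj_of_card (fun i => ?_) (fun i i' e => ?_) hN.le
    · have := hac' 0 i
      rwa [ha0 i] at this
    · exact dC i i' _ (hcC 0 i) (e ▸ hcC 0 i')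
  subst hα0
  suffices H : ∃ G' : G.Subgraph, IsSubdivision G'.coe K33 ∧ α 0 ∈ G'.verts ∧
      G'.neighborSet (α 0) = G.neighborSet (α 0) by
    obtain ⟨G', h1, h2, h3⟩ := H
    exact ⟨G', h1, h2, (congrArg Set.ncard h3).trans hN⟩
  refine asmG G (Sum.elim α γ) ?_ q ?_ ?_ ?_ ?_
  · rintro (k | i) (k' | i') e
    · have e : α k = α k' := e
      rw [dA k k' (α k) (hαA k) (e ▸ hαA k')]
    · have e : α k = γ i' := e
      exact absurd (e ▸ hγC i') (dAC k i' _ (hαA k))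
    · have e : γ i = α k' := e
      exact absurd (hγC i) (dAC k' i _ (e ▸ hαA k'))
    · have e : γ i = γ i' := e
      rw [dC i i' (γ i) (hγC i) (e ▸ hγC i')]
  · intro k i
    change ((P k i).append (Walk.cons (hac' k i) (Q i k).reverse)).IsPath
    rw [Walk.isPath_def]
    rw [Walk.support_append, Walk.support_cons, List.tail_cons]
    refine List.Nodup.append (hP k i).support_nodup (hQ i k).reverse.support_nodup ?_
    intro v hv hv'
    rw [Walk.support_reverse, List.mem_reverse] at hv'
    exact dAC k i v (hPs k i v hv) (hQs i k v hv')
  · rintro k i (k' | i') hw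
    · have hw : α k' ∈ (q k i).support := hw
      rcases (hqs _ _ _).1 hw with h | h
      · left; rw [dA _ _ _ (hαA k') (hPs _ _ _ h)]
      · exact absurd (hQs _ _ _ h) (dAC _ _ _ (hαA k'))
    · have hw : γ i' ∈ (q k i).support := hw
      rcases (hqs _ _ _).1 hw with h | h
      · exact absurd (hγC i') (dAC _ _ _ (hPs _ _ _ h))
      · right; rw [dC _ _ _ (hγC i') (hQs _ _ _ h)]
  · intro k i k' i' v hne hv hv'
    rcases (hqs _ _ _).1 hv with h | h <;> rcases (hqs _ _ _).1 hv' with h' | h'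
    · have e := dA _ _ _ (hPs _ _ _ h) (hPs _ _ _ h')
      subst e
      exact ⟨Sum.inl k, (hPd k i i' v (fun e => hne ⟨rfl, e⟩) h h').symm⟩
    · exact absurd (hQs _ _ _ h') (dAC _ _ _ (hPs _ _ _ h))
    · exact absurd (hQs _ _ _ h) (dAC _ _ _ (hPs _ _ _ h'))
    · have e := dC _ _ _ (hQs _ _ _ h) (hQs _ _ _ h')
      subst e
      exact ⟨Sum.inr i, (hQd i k k' v (fun e => hne ⟨e, rfl⟩) h h').symm⟩
  · intro v hv
    obtain ⟨i, rfl⟩ := hsurj v hv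
    refine ⟨i, ?_⟩
    have : s(a 0 i, c 0 i) ∈ (q 0 i).edges := by simp [q]
    rw [ha0 i] at this
    exact this

end R5

/-- If `x` is a cubic vertex of a nonplanar graph `G` and no `k`-separation (`k ≤ 2`)
has a side containing `x` and all its neighbours, then `G` has a subgraph that is a
subdivision of `K₃,₃` in which `x` is a (cubic) branch vertex. -/
theorem stmt5 {V : Type} [Fintype V] (G : SimpleGraph V) (hnp : ¬ Planar G) (x : V)
    (hdeg : (G.neighborSet x).ncard = 3)
    (hsep : ∀ (k : ℕ) (A B : Set V), k ≤ 2 → IsSep G k A B →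
      ¬ (insert x (G.neighborSet x) ⊆ A ∨ insert x (G.neighborSet x) ⊆ B)) :
    ∃ G' : G.Subgraph, IsSubdivision G'.coe K33 ∧ x ∈ G'.verts ∧
      (G'.neighborSet x).ncard = 3 := by
  apply R5.good_sub hdeg
  have hsep' : ∀ A B : Set V, A ∪ B = Set.univ → A ≠ Set.univ → B ≠ Set.univ →
      (A ∩ B).ncard ≤ 2 → R5.NoCross G A B → ¬ (insert x (G.neighborSet x) ⊆ A) :=
    fun A B h1 h2 h3 h4 h5 h6 =>
      hsep _ A B h4 ⟨h1, h2, h3, rfl, fun a b hab => h5 a b hab⟩ (Or.inl h6)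
  have hmdl : ∀ {W : Type} {J : SimpleGraph W}, IsMinor J G → ∃ μ : W → Set V, R5.Mdl J G μ := by
    rintro W J ⟨B, h1, h2, h3, h4⟩
    refine ⟨B, h1, fun w => R5.cn_of_connected (h2 w), ?_, fun w w' h => h4 h⟩
    intro w w' v hv hv'
    by_contra hne
    exact Set.disjoint_left.1 (h3 hne) hv hv'
  by_cases h5 : IsMinor K5 G
  · obtain ⟨μ, hμ⟩ := hmdl h5
    exact R5.good5 hdeg hμ (R5.tied_of_sep hμ.ne hdeg hsep')
  · have h33 : IsMinor K33 G := by
      by_contra h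
      exact hnp ⟨h5, h⟩
    obtain ⟨μ, hμ⟩ := hmdl h33
    exact R5.good33 hdeg hμ (R5.tied_of_sep hμ.ne hdeg hsep')
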